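/- Let 𝛑 be a policy ensemble, Lipschitz continuous in α up to finitely many discontinuities, with 𝛍 = Ψ(𝛑). Under Assumptions (W) and (Lip), consider the N-agent policy (π¹,…,π^{i−1},π̂,π^{i+1},…,π^N) where (π¹,…,π^N) = Γ_N(𝛑) and π̂ ∈ Π is arbitrary. Then for any family 𝓗 of functions h : 𝒳 × ℬ₁(𝒳) → ℝ which is uniformly bounded and uniformly Lipschitz, and any ε, p > 0 and t ∈ 𝒯, there exists N' such that for all N > N': sup_{h∈𝓗} |E[h(X^i_t, 𝔾^i_t)] − E[h(X̂^{i/N}_t, 𝔾^{i/N}_t)]| < ε, uniformly over all deviations π̂ ∈ Π and all i in some set 𝒲_N ⊆ 𝒱_N with |𝒲_N| ≥ ⌊(1−p)N⌋, where 𝔾^i_t = (1/N)Σ_j ξ^N_{i,j} δ_{X^j_t} is the empirical neighborhood mean field and 𝔾^{i/N}_t = ∫₀¹ W(i/N,β) μ^β_t dβ the limiting one. -/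

import Mathlib

open MeasureTheory Filter
open scoped BigOperators

namespace GMFG

variable {𝒳 𝒰 : Type*}

/-- The probability simplex 𝒫(𝒳) on a finite set, as probability mass functions. -/
def simplex (𝒳 : Type*) [Fintype 𝒳] : Set (𝒳 → ℝ) :=
  {p | (∀ x, 0 ≤ p x) ∧ ∑ x, p x = 1}

/-- The set ℬ₁(𝒳) of (sub-probability) measures with total mass at most 1,
as mass functions. -/
def subProb (𝒳 : Type*) [Fintype 𝒳] : Set (𝒳 → ℝ) :=
  {p | (∀ x, 0 ≤ p x) ∧ ∑ x, p x ≤ 1}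

/-- L¹ distance between measures on a finite set. -/
noncomputable def l1dist [Fintype 𝒳] (ν ν' : 𝒳 → ℝ) : ℝ := ∑ x, |ν x - ν' x|

/-- Markovian feedback policies π ∈ Π = 𝒫(𝒰)^{𝒯×𝒳}. -/
def IsPolicy [Fintype 𝒰] (π : ℕ → 𝒳 → 𝒰 → ℝ) : Prop :=
  ∀ t x, (∀ u, 0 ≤ π t x u) ∧ ∑ u, π t x u = 1

/-- P : 𝒳×𝒰×ℬ₁(𝒳) → 𝒫(𝒳) is a transition kernel. -/
def IsKernel [Fintype 𝒳] [Fintype 𝒰] (P : 𝒳 → 𝒰 → (𝒳 → ℝ) → 𝒳 → ℝ) : Prop :=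
  ∀ x u ν, ν ∈ subProb 𝒳 → P x u ν ∈ simplex 𝒳

/-- Lipschitz continuity of the transition kernel w.r.t. the L¹ norm. -/
def KernelLipschitz [Fintype 𝒳] [Fintype 𝒰] (P : 𝒳 → 𝒰 → (𝒳 → ℝ) → 𝒳 → ℝ) (L : ℝ) : Prop :=
  ∀ x u ν ν', ν ∈ subProb 𝒳 → ν' ∈ subProb 𝒳 → l1dist (P x u ν) (P x u ν') ≤ L * l1dist ν ν'

/-- Lipschitz continuity of the reward w.r.t. the L¹ norm. -/
def RewardLipschitz [Fintype 𝒳] [Fintype 𝒰] (r : 𝒳 → 𝒰 → (𝒳 → ℝ) → ℝ) (L : ℝ) : Prop :=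
  ∀ x u ν ν', ν ∈ subProb 𝒳 → ν' ∈ subProb 𝒳 → |r x u ν - r x u ν'| ≤ L * l1dist ν ν'

/-- A graphon: symmetric, measurable, [0,1]-valued. -/
def IsGraphon (W : ℝ → ℝ → ℝ) : Prop :=
  Measurable (Function.uncurry W) ∧ (∀ a b, W a b = W b a) ∧ ∀ a b, W a b ∈ Set.Icc (0:ℝ) 1

/-- Lipschitz continuity of a graphon on [0,1]². -/
def GraphonLipschitz (W : ℝ → ℝ → ℝ) (L : ℝ) : Prop :=
  ∀ a b a' b' : ℝ, a ∈ Set.Icc (0:ℝ) 1 → b ∈ Set.Icc (0:ℝ) 1 → a' ∈ Set.Icc (0:ℝ) 1 →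
    b' ∈ Set.Icc (0:ℝ) 1 → |W a b - W a' b'| ≤ L * (|a - a'| + |b - b'|)

/-- The neighborhood mean field 𝔾^α = ∫₀¹ W(α,β) ν^β dβ of a state marginal ensemble ν. -/
noncomputable def nbhd [Fintype 𝒳] (W : ℝ → ℝ → ℝ) (ν : ℝ → 𝒳 → ℝ) (α : ℝ) : 𝒳 → ℝ :=
  fun x => ∫ β in Set.Ioc (0:ℝ) 1, W α β * ν β x

/-- 𝛍 = Ψ(𝛑): the (measurable) mean field ensemble generated by the policy ensemble 𝛑,
via μ^α_0 = μ₀ and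
μ^α_{t+1}(x') = Σ_{x,u} μ^α_t(x) π^α_t(u|x) P(x'|x,u,𝔾^α_t). -/
def IsMeanFieldOf [Fintype 𝒳] [Fintype 𝒰] (W : ℝ → ℝ → ℝ) (P : 𝒳 → 𝒰 → (𝒳 → ℝ) → 𝒳 → ℝ)
    (μ0 : 𝒳 → ℝ) (πe : ℝ → ℕ → 𝒳 → 𝒰 → ℝ) (μ : ℕ → ℝ → 𝒳 → ℝ) : Prop :=
  (∀ t x, Measurable fun α => μ t α x) ∧
  (∀ α ∈ Set.Icc (0:ℝ) 1, μ 0 α = μ0) ∧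
  ∀ t : ℕ, ∀ α ∈ Set.Icc (0:ℝ) 1, ∀ x' : 𝒳,
    μ (t+1) α x' = ∑ x, μ t α x * ∑ u, πe α t x u * P x u (nbhd W (μ t) α) x'

/-- The law of the state of a single mean field agent with neighborhood mean field
G and policy π: X_0 ∼ μ₀, U_t ∼ π_t(·|X_t), X_{t+1} ∼ P(·|X_t,U_t,G_t). -/
noncomputable def stateLaw [Fintype 𝒳] [Fintype 𝒰] (P : 𝒳 → 𝒰 → (𝒳 → ℝ) → 𝒳 → ℝ)
    (μ0 : 𝒳 → ℝ) (G : ℕ → 𝒳 → ℝ) (π : ℕ → 𝒳 → 𝒰 → ℝ) : ℕ → 𝒳 → ℝ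
  | 0 => μ0
  | (t+1) => fun x' => ∑ x, stateLaw P μ0 G π t x * ∑ u, π t x u * P x u (G t) x'

/-- Mean field objective J(π) = E[Σ_{t<T} r(X_t,U_t,G_t)] of a single agent whose
neighborhood mean field is G. -/
noncomputable def Jmf [Fintype 𝒳] [Fintype 𝒰] (T : ℕ) (r : 𝒳 → 𝒰 → (𝒳 → ℝ) → ℝ)
    (P : 𝒳 → 𝒰 → (𝒳 → ℝ) → 𝒳 → ℝ) (μ0 : 𝒳 → ℝ) (G : ℕ → 𝒳 → ℝ) (π : ℕ → 𝒳 → 𝒰 → ℝ) : ℝ :=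
  ∑ t ∈ Finset.range T, ∑ x, stateLaw P μ0 G π t x * ∑ u, π t x u * r x u (G t)

/-- A Graphon Mean Field Equilibrium: a measurable policy ensemble 𝛑 and mean field
ensemble 𝛍 with 𝛍 = Ψ(𝛑) and π^α optimal for J^𝛍_α for every α ∈ [0,1]. -/
def IsGMFE [Fintype 𝒳] [Fintype 𝒰] (T : ℕ) (W : ℝ → ℝ → ℝ) (P : 𝒳 → 𝒰 → (𝒳 → ℝ) → 𝒳 → ℝ)
    (r : 𝒳 → 𝒰 → (𝒳 → ℝ) → ℝ) (μ0 : 𝒳 → ℝ)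
    (πe : ℝ → ℕ → 𝒳 → 𝒰 → ℝ) (μ : ℕ → ℝ → 𝒳 → ℝ) : Prop :=
  (∀ t x u, Measurable fun α => πe α t x u) ∧
  (∀ α ∈ Set.Icc (0:ℝ) 1, IsPolicy (πe α)) ∧
  IsMeanFieldOf W P μ0 πe μ ∧
  ∀ α ∈ Set.Icc (0:ℝ) 1, ∀ π' : ℕ → 𝒳 → 𝒰 → ℝ, IsPolicy π' →
    Jmf T r P μ0 (fun t => nbhd W (μ t) α) π' ≤ Jmf T r P μ0 (fun t => nbhd W (μ t) α) (πe α)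

/-- α ↦ π^α is Lipschitz continuous up to a finite set D of discontinuities. -/
def EnsembleLipschitzUpTo [Fintype 𝒳] [Fintype 𝒰] (πe : ℝ → ℕ → 𝒳 → 𝒰 → ℝ) : Prop :=
  ∃ (L : ℝ) (D : Finset ℝ), ∀ (t : ℕ) (x : 𝒳) (u : 𝒰),
    ∀ α ∈ Set.Icc (0:ℝ) 1, ∀ β ∈ Set.Icc (0:ℝ) 1,
      (∀ d ∈ D, d ∉ Set.uIcc α β) → |πe α t x u - πe β t x u| ≤ L * |α - β|

/-- Edge indicators of a simple (undirected) graph. -/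
def IsEdgeWeights {N : ℕ} (ξ : Fin N → Fin N → ℝ) : Prop :=
  (∀ i j, ξ i j = 0 ∨ ξ i j = 1) ∧ ∀ i j, ξ i j = ξ j i

/-- Empirical neighborhood mean field 𝔾ⁱ = (1/N) Σ_j ξ_{ij} δ_{X^j}. -/
noncomputable def empNbhd [Fintype 𝒳] [DecidableEq 𝒳] {N : ℕ} (ξ : Fin N → Fin N → ℝ)
    (X : Fin N → 𝒳) (i : Fin N) : 𝒳 → ℝ :=
  fun x => (N : ℝ)⁻¹ * ∑ j, ξ i j * (if X j = x then 1 else 0)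

/-- The joint law of the N agents' states at time t: X^i_0 ∼ μ₀ i.i.d.,
U^i_t ∼ π^i_t(·|X^i_t), X^i_{t+1} ∼ P(·|X^i_t,U^i_t,𝔾^i_t) conditionally independently. -/
noncomputable def jointLaw [Fintype 𝒳] [DecidableEq 𝒳] [Fintype 𝒰] {N : ℕ}
    (P : 𝒳 → 𝒰 → (𝒳 → ℝ) → 𝒳 → ℝ) (μ0 : 𝒳 → ℝ) (ξ : Fin N → Fin N → ℝ)
    (πs : Fin N → ℕ → 𝒳 → 𝒰 → ℝ) : ℕ → (Fin N → 𝒳) → ℝ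
  | 0 => fun X => ∏ i, μ0 (X i)
  | (t+1) => fun Y => ∑ X : Fin N → 𝒳, jointLaw P μ0 ξ πs t X *
      ∏ i, ∑ u, πs i t (X i) u * P (X i) u (empNbhd ξ X i) (Y i)

/-- The objective J^N_i = E[Σ_{t<T} r(X^i_t,U^i_t,𝔾^i_t)] of agent i in the N-agent game. -/
noncomputable def JN [Fintype 𝒳] [DecidableEq 𝒳] [Fintype 𝒰] {N : ℕ} (T : ℕ)
    (r : 𝒳 → 𝒰 → (𝒳 → ℝ) → ℝ) (P : 𝒳 → 𝒰 → (𝒳 → ℝ) → 𝒳 → ℝ) (μ0 : 𝒳 → ℝ)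
    (ξ : Fin N → Fin N → ℝ) (πs : Fin N → ℕ → 𝒳 → 𝒰 → ℝ) (i : Fin N) : ℝ :=
  ∑ t ∈ Finset.range T, ∑ X : Fin N → 𝒳, jointLaw P μ0 ξ πs t X *
    ∑ u, πs i t (X i) u * r (X i) u (empNbhd ξ X i)

/-- Γ_N(𝛑) = (π^{1/N},…,π^{N/N}) (agent i : Fin N has graphon index (i+1)/N). -/
noncomputable def gammaN (πe : ℝ → ℕ → 𝒳 → 𝒰 → ℝ) (N : ℕ) : Fin N → ℕ → 𝒳 → 𝒰 → ℝ :=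
  fun i => πe ((((i : ℕ) : ℝ) + 1) / N)

/-- The step graphon W_N of a finite graph: W_N(x,y) = ξ_{⌈Nx⌉,⌈Ny⌉}. -/
noncomputable def stepGraphon {N : ℕ} (ξ : Fin N → Fin N → ℝ) : ℝ → ℝ → ℝ := fun a b =>
  ∑ i : Fin N, ∑ j : Fin N,
    (if ((i : ℕ) : ℝ) / N < a ∧ a ≤ (((i : ℕ) : ℝ) + 1) / N then 1 else 0) *
    (if ((j : ℕ) : ℝ) / N < b ∧ b ≤ (((j : ℕ) : ℝ) + 1) / N then 1 else 0) * ξ i j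

/-- Assumption (W): ‖W_N − W‖_{L∞→L1} → 0, i.e.
sup_{‖g‖∞ ≤ 1} ∫₀¹ |∫₀¹ (W_N(α,β) − W(α,β)) g(β) dβ| dα → 0. -/
def OpConvergesTo (WN : (N : ℕ) → ℝ → ℝ → ℝ) (W : ℝ → ℝ → ℝ) : Prop :=
  ∀ ε > (0:ℝ), ∃ N₀ : ℕ, ∀ N ≥ N₀, ∀ g : ℝ → ℝ, Measurable g → (∀ β, |g β| ≤ 1) →
    (∫ α in Set.Ioc (0:ℝ) 1, |∫ β in Set.Ioc (0:ℝ) 1, (WN N α β - W α β) * g β|) ≤ ε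

/-- ‖W_N − W‖_{L∞→L1} = O(1/√N). -/
def OpRateSqrt (WN : (N : ℕ) → ℝ → ℝ → ℝ) (W : ℝ → ℝ → ℝ) : Prop :=
  ∃ C : ℝ, ∀ N : ℕ, 1 ≤ N → ∀ g : ℝ → ℝ, Measurable g → (∀ β, |g β| ≤ 1) →
    (∫ α in Set.Ioc (0:ℝ) 1, |∫ β in Set.Ioc (0:ℝ) 1, (WN N α β - W α β) * g β|) ≤ C / Real.sqrt N

/-- 𝛍^N_t(f) = ∫₀¹ f(X^{⌈Nα⌉}, α) dα, the integral of f against the random empirical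
step measure ensemble. -/
noncomputable def empInt [Fintype 𝒳] {N : ℕ} (f : 𝒳 → ℝ → ℝ) (X : Fin N → 𝒳) : ℝ :=
  ∑ i : Fin N, ∫ α in Set.Ioc (((i : ℕ) : ℝ) / N) ((((i : ℕ) : ℝ) + 1) / N), f (X i) α

/-- 𝛍_t(f) = ∫₀¹ Σ_x f(x,α) μ^α_t(x) dα. -/
noncomputable def mfInt [Fintype 𝒳] (f : 𝒳 → ℝ → ℝ) (ν : ℝ → 𝒳 → ℝ) : ℝ :=
  ∫ α in Set.Ioc (0:ℝ) 1, ∑ x, f x α * ν α x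

/-- The representative α_m = (m+1)/M of the m-th equivalence class Ĩ_m = (m/M,(m+1)/M]. -/
noncomputable def rep (M : ℕ) (m : Fin M) : ℝ := (((m : ℕ) : ℝ) + 1) / M

/-- Discretized neighborhood mean field 𝔾̂^{α_m} = (1/M) Σ_n W(α_m,α_n) ν^{α_n}. -/
noncomputable def approxNbhd [Fintype 𝒳] {M : ℕ} (W : ℝ → ℝ → ℝ) (ν : Fin M → 𝒳 → ℝ)
    (m : Fin M) : 𝒳 → ℝ :=
  fun x => (M : ℝ)⁻¹ * ∑ n, W (rep M m) (rep M n) * ν n x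

/-- The approximate mean field μ̂ = Ψ̂(𝛑) of the M equivalence classes method. -/
noncomputable def approxMF [Fintype 𝒳] [Fintype 𝒰] {M : ℕ} (W : ℝ → ℝ → ℝ)
    (P : 𝒳 → 𝒰 → (𝒳 → ℝ) → 𝒳 → ℝ) (μ0 : 𝒳 → ℝ) (πm : Fin M → ℕ → 𝒳 → 𝒰 → ℝ) :
    ℕ → Fin M → 𝒳 → ℝ
  | 0 => fun _ => μ0
  | (t+1) => fun m x' => ∑ x, approxMF W P μ0 πm t m x *
      ∑ u, πm m t x u * P x u (approxNbhd W (approxMF W P μ0 πm t) m) x'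

/-- A solution (𝛑, 𝛍) of the M equivalence classes method: 𝛑 is determined by policies
π^{α_m} (one per class), each optimal for the generated approximate mean field 𝛍 = Ψ̂(𝛑). -/
def IsEqClassSolution [Fintype 𝒳] [Fintype 𝒰] (T : ℕ) {M : ℕ} (W : ℝ → ℝ → ℝ)
    (P : 𝒳 → 𝒰 → (𝒳 → ℝ) → 𝒳 → ℝ) (r : 𝒳 → 𝒰 → (𝒳 → ℝ) → ℝ) (μ0 : 𝒳 → ℝ)
    (πm : Fin M → ℕ → 𝒳 → 𝒰 → ℝ) : Prop :=
  (∀ m, IsPolicy (πm m)) ∧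
  ∀ m, ∀ π' : ℕ → 𝒳 → 𝒰 → ℝ, IsPolicy π' →
    Jmf T r P μ0 (fun t => approxNbhd W (approxMF W P μ0 πm t) m) π'
      ≤ Jmf T r P μ0 (fun t => approxNbhd W (approxMF W P μ0 πm t) m) (πm m)

/-- The optimal action value function Q with k steps to go from time t,
Q(t,x,u) = r(x,u,G_t) + Σ_{x'} P(x'|x,u,G_t) max_{u'} Q(t+1,x',u'). -/
noncomputable def Qfun [Fintype 𝒳] [Fintype 𝒰] [Nonempty 𝒰] (r : 𝒳 → 𝒰 → (𝒳 → ℝ) → ℝ)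
    (P : 𝒳 → 𝒰 → (𝒳 → ℝ) → 𝒳 → ℝ) (G : ℕ → 𝒳 → ℝ) : ℕ → ℕ → 𝒳 → 𝒰 → ℝ
  | 0 => fun _ _ _ => 0
  | (k+1) => fun t x u => r x u (G t) + ∑ x', P x u (G t) x' *
      Finset.univ.sup' Finset.univ_nonempty (fun u' => Qfun r P G k (t+1) x' u')

/-- The Boltzmann (softmax) policy Φ̂_η(𝛍) of the M equivalence classes method with
horizon T, temperature η and block mean field ν. -/
noncomputable def boltzmann [Fintype 𝒳] [Fintype 𝒰] [Nonempty 𝒰] (T : ℕ) (η : ℝ)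
    (r : 𝒳 → 𝒰 → (𝒳 → ℝ) → ℝ) (P : 𝒳 → 𝒰 → (𝒳 → ℝ) → 𝒳 → ℝ) (W : ℝ → ℝ → ℝ) {M : ℕ}
    (ν : ℕ → Fin M → 𝒳 → ℝ) : Fin M → ℕ → 𝒳 → 𝒰 → ℝ :=
  fun m t x u =>
    Real.exp (Qfun r P (fun s => approxNbhd W (ν s) m) (T - t) t x u / η) /
      ∑ u' : 𝒰, Real.exp (Qfun r P (fun s => approxNbhd W (ν s) m) (T - t) t x u' / η)

/-- One step 𝛍 ↦ Ψ̂(Φ̂_η(𝛍)) of the Boltzmann fixed point iteration. -/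
noncomputable def boltzIter [Fintype 𝒳] [Fintype 𝒰] [Nonempty 𝒰] (T : ℕ) (η : ℝ)
    (r : 𝒳 → 𝒰 → (𝒳 → ℝ) → ℝ) (P : 𝒳 → 𝒰 → (𝒳 → ℝ) → 𝒳 → ℝ) (W : ℝ → ℝ → ℝ) (μ0 : 𝒳 → ℝ)
    {M : ℕ} (ν : ℕ → Fin M → 𝒳 → ℝ) : ℕ → Fin M → 𝒳 → ℝ :=
  fun t => approxMF W P μ0 (boltzmann T η r P W ν) t


section PartA

lemma prod_exp_one [Fintype 𝒳] {N : ℕ} (q : Fin N → 𝒳 → ℝ) (hq : ∀ j, ∑ x, q j x = 1)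
    (i : Fin N) (F : 𝒳 → ℝ) :
    ∑ Y : Fin N → 𝒳, (∏ j, q j (Y j)) * F (Y i) = ∑ x, q i x * F x := by
  classical
  have h1 : ∀ Y : Fin N → 𝒳, (∏ j, q j (Y j)) * F (Y i)
      = ∏ j, (q j (Y j) * if j = i then F (Y j) else 1) := by
    intro Y
    rw [Finset.prod_mul_distrib, Finset.prod_ite_eq']
    simp
  simp_rw [h1]
  have h2 := Finset.prod_univ_sum (fun _ : Fin N => (Finset.univ : Finset 𝒳))
    (fun j x => q j x * if j = i then F x else 1)
  rw [Fintype.piFinset_univ] at h2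
  rw [← h2, Finset.prod_eq_single i]
  · simp
  · intro b _ hb
    simp [hb, hq]
  · simp

lemma prod_exp_total [Fintype 𝒳] {N : ℕ} (q : Fin N → 𝒳 → ℝ) (hq : ∀ j, ∑ x, q j x = 1) :
    ∑ Y : Fin N → 𝒳, (∏ j, q j (Y j)) = 1 := by
  classical
  have h2 := Finset.prod_univ_sum (fun _ : Fin N => (Finset.univ : Finset 𝒳)) (fun j x => q j x)
  rw [Fintype.piFinset_univ] at h2
  rw [← h2]
  simp [hq]

lemma prod_exp_two [Fintype 𝒳] {N : ℕ} (q : Fin N → 𝒳 → ℝ)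
    (i k : Fin N) (hik : i ≠ k) (F G : 𝒳 → ℝ) (hF : ∑ x, q i x * F x = 0) :
    ∑ Y : Fin N → 𝒳, (∏ j, q j (Y j)) * (F (Y i) * G (Y k)) = 0 := by
  classical
  have h1 : ∀ Y : Fin N → 𝒳, (∏ j, q j (Y j)) * (F (Y i) * G (Y k))
      = ∏ j, (q j (Y j) * ((if j = i then F (Y j) else 1) * (if j = k then G (Y j) else 1))) := by
    intro Y
    rw [Finset.prod_mul_distrib, Finset.prod_mul_distrib, Finset.prod_ite_eq', Finset.prod_ite_eq']
    simp
  simp_rw [h1]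
  have h2 := Finset.prod_univ_sum (fun _ : Fin N => (Finset.univ : Finset 𝒳))
    (fun j x => q j x * ((if j = i then F x else 1) * (if j = k then G x else 1)))
  rw [Fintype.piFinset_univ] at h2
  rw [← h2]
  apply Finset.prod_eq_zero (Finset.mem_univ i)
  simp [hik, hF]

lemma avg_abs_le_one [Fintype 𝒳] (q : 𝒳 → ℝ) (hq : q ∈ simplex 𝒳) (f : 𝒳 → ℝ)
    (hf : ∀ x, |f x| ≤ 1) : |∑ x, q x * f x| ≤ 1 := by
  calc |∑ x, q x * f x| ≤ ∑ x, |q x * f x| := Finset.abs_sum_le_sum_abs _ _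
    _ ≤ ∑ x, q x := by
        apply Finset.sum_le_sum
        intro x _
        rw [abs_mul, abs_of_nonneg (hq.1 x)]
        exact mul_le_of_le_one_right (hq.1 x) (hf x)
    _ = 1 := hq.2

lemma prod_lln [Fintype 𝒳] {N : ℕ} (hN : 0 < N) (q : Fin N → 𝒳 → ℝ) (hq : ∀ j, q j ∈ simplex 𝒳)
    (f : Fin N → 𝒳 → ℝ) (hf : ∀ j x, |f j x| ≤ 1) :
    ∑ Y : Fin N → 𝒳, (∏ j, q j (Y j)) *
      |(N : ℝ)⁻¹ * ∑ j, f j (Y j) - (N : ℝ)⁻¹ * ∑ j, ∑ x, q j x * f j x| ≤ 5 / Real.sqrt N := by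
  classical
  have hNpos : (0:ℝ) < N := by exact_mod_cast hN
  have hs : 0 < Real.sqrt N := Real.sqrt_pos.2 hNpos
  have hss : Real.sqrt N * Real.sqrt N = N := Real.mul_self_sqrt hNpos.le
  set c : Fin N → 𝒳 → ℝ := fun j x => f j x - ∑ y, q j y * f j y with hc
  have hsum : ∀ j, ∑ x, q j x = 1 := fun j => (hq j).2
  have hc0 : ∀ j, ∑ x, q j x * c j x = 0 := by
    intro j
    simp only [hc, mul_sub, Finset.sum_sub_distrib, ← Finset.sum_mul, hsum, one_mul, sub_self]
  have hc2 : ∀ j x, c j x * c j x ≤ 4 := by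
    intro j x
    have h1 := abs_le.1 (hf j x)
    have h2 := abs_le.1 (avg_abs_le_one (q j) (hq j) (f j) (hf j))
    have : |c j x| ≤ 2 := abs_le.2 ⟨by simp only [hc]; linarith, by simp only [hc]; linarith⟩
    have h3 := abs_le.1 this
    nlinarith
  have hp0 : ∀ Y : Fin N → 𝒳, 0 ≤ ∏ j, q j (Y j) := fun Y =>
    Finset.prod_nonneg fun j _ => (hq j).1 _
  have hZ : ∀ Y : Fin N → 𝒳, (N : ℝ)⁻¹ * ∑ j, f j (Y j) - (N : ℝ)⁻¹ * ∑ j, ∑ x, q j x * f j x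
      = (N : ℝ)⁻¹ * ∑ j, c j (Y j) := by
    intro Y
    simp only [hc, Finset.sum_sub_distrib]; ring
  have hvar : ∑ Y : Fin N → 𝒳, (∏ j, q j (Y j)) * (∑ j, c j (Y j)) ^ 2 ≤ 4 * N := by
    have : ∀ Y : Fin N → 𝒳, (∏ j, q j (Y j)) * (∑ j, c j (Y j)) ^ 2
        = ∑ j, ∑ k, (∏ j, q j (Y j)) * (c j (Y j) * c k (Y k)) := by
      intro Y
      rw [sq, Finset.sum_mul_sum, Finset.mul_sum]
      simp_rw [Finset.mul_sum]
    simp_rw [this]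
    rw [Finset.sum_comm]
    have h4 : ∀ j : Fin N, ∑ Y : Fin N → 𝒳, ∑ k, (∏ j, q j (Y j)) * (c j (Y j) * c k (Y k)) ≤ 4 := by
      intro j
      rw [Finset.sum_comm, Finset.sum_eq_single j]
      · rw [prod_exp_one q hsum j (fun x => c j x * c j x)]
        calc ∑ x, q j x * (c j x * c j x) ≤ ∑ x, q j x * 4 :=
              Finset.sum_le_sum fun x _ => mul_le_mul_of_nonneg_left (hc2 j x) ((hq j).1 x)
          _ = 4 := by rw [← Finset.sum_mul, hsum]; ring
      · intro k _ hk
        exact prod_exp_two q j k (Ne.symm hk) (c j) (c k) (hc0 j)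
      · simp
    calc _ ≤ ∑ j : Fin N, (4:ℝ) := Finset.sum_le_sum fun j _ => h4 j
      _ = 4 * N := by simp; ring
  simp_rw [hZ]
  set s := Real.sqrt N
  have hpt : ∀ z : ℝ, |(N:ℝ)⁻¹ * z| ≤ z ^ 2 * (s * ((N:ℝ)⁻¹) ^ 2) + 1 / s := by
    intro z
    set w := (N:ℝ)⁻¹ * z with hw
    have : z ^ 2 * (s * ((N:ℝ)⁻¹) ^ 2) = s * w ^ 2 := by rw [hw]; ring
    rw [this, ← sq_abs w]
    have h5 : s * |w| ^ 2 + 1 / s - |w| = ((s * |w| - 1) ^ 2 + s * |w|) / s := by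
      field_simp; ring
    have h6 : 0 ≤ ((s * |w| - 1) ^ 2 + s * |w|) / s := by positivity
    linarith
  calc ∑ Y : Fin N → 𝒳, (∏ j, q j (Y j)) * |(N : ℝ)⁻¹ * ∑ j, c j (Y j)|
      ≤ ∑ Y : Fin N → 𝒳, (∏ j, q j (Y j)) * ((∑ j, c j (Y j)) ^ 2 * (s * ((N:ℝ)⁻¹) ^ 2) + 1 / s) :=
        Finset.sum_le_sum fun Y _ => mul_le_mul_of_nonneg_left (hpt _) (hp0 Y)
    _ = (∑ Y : Fin N → 𝒳, (∏ j, q j (Y j)) * (∑ j, c j (Y j)) ^ 2) * (s * ((N:ℝ)⁻¹) ^ 2) + 1 / s := by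
        simp_rw [mul_add, ← mul_assoc, Finset.sum_add_distrib, ← Finset.sum_mul]
        rw [prod_exp_total q hsum]; ring
    _ ≤ (4 * N) * (s * ((N:ℝ)⁻¹) ^ 2) + 1 / s := by gcongr
    _ = 5 / s := by
        rw [← hss]; field_simp; norm_num

lemma empNbhd_mem [Fintype 𝒳] [DecidableEq 𝒳] {N : ℕ} (hN : 0 < N) (ξ : Fin N → Fin N → ℝ)
    (hξ : IsEdgeWeights ξ) (X : Fin N → 𝒳) (i : Fin N) : empNbhd ξ X i ∈ subProb 𝒳 := by
  have hNpos : (0:ℝ) < N := by exact_mod_cast hN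
  have h01 : ∀ j, 0 ≤ ξ i j ∧ ξ i j ≤ 1 := by
    intro j
    rcases hξ.1 i j with h | h <;> rw [h] <;> norm_num
  constructor
  · intro x
    unfold empNbhd
    apply mul_nonneg (by positivity)
    apply Finset.sum_nonneg
    intro j _
    apply mul_nonneg (h01 j).1
    split_ifs <;> norm_num
  · unfold empNbhd
    rw [← Finset.mul_sum, Finset.sum_comm]
    have : ∀ j, ∑ x, ξ i j * (if X j = x then (1:ℝ) else 0) = ξ i j := by
      intro j; rw [← Finset.mul_sum]; simp
    simp_rw [this]
    rw [inv_mul_le_iff₀ hNpos, mul_one]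
    calc ∑ j, ξ i j ≤ ∑ j : Fin N, (1:ℝ) := Finset.sum_le_sum fun j _ => (h01 j).2
      _ = N := by simp

/-- One-step law of a single agent. -/
noncomputable def oneStep [Fintype 𝒳] [Fintype 𝒰] (P : 𝒳 → 𝒰 → (𝒳 → ℝ) → 𝒳 → ℝ)
    (π : 𝒳 → 𝒰 → ℝ) (x : 𝒳) (G : 𝒳 → ℝ) : 𝒳 → ℝ := fun y => ∑ u, π x u * P x u G y

lemma oneStep_mem [Fintype 𝒳] [Fintype 𝒰] {P : 𝒳 → 𝒰 → (𝒳 → ℝ) → 𝒳 → ℝ} (hP : IsKernel P)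
    {π : ℕ → 𝒳 → 𝒰 → ℝ} (hπ : IsPolicy π) (t : ℕ) (x : 𝒳) {G : 𝒳 → ℝ} (hG : G ∈ subProb 𝒳) :
    oneStep P (π t) x G ∈ simplex 𝒳 := by
  constructor
  · intro y
    exact Finset.sum_nonneg fun u _ => mul_nonneg ((hπ t x).1 u) ((hP x u G hG).1 y)
  · unfold oneStep
    rw [Finset.sum_comm]
    simp_rw [← Finset.mul_sum, (hP x _ G hG).2, mul_one, (hπ t x).2]

lemma l1dist_nonneg [Fintype 𝒳] (ν ν' : 𝒳 → ℝ) : 0 ≤ l1dist ν ν' :=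
  Finset.sum_nonneg fun _ _ => abs_nonneg _

lemma oneStep_lip [Fintype 𝒳] [Fintype 𝒰] {P : 𝒳 → 𝒰 → (𝒳 → ℝ) → 𝒳 → ℝ} {LP : ℝ}
    (hPLip : KernelLipschitz P LP)
    {π : ℕ → 𝒳 → 𝒰 → ℝ} (hπ : IsPolicy π) (t : ℕ) (x : 𝒳) {G G' : 𝒳 → ℝ} (hG : G ∈ subProb 𝒳)
    (hG' : G' ∈ subProb 𝒳) :
    l1dist (oneStep P (π t) x G) (oneStep P (π t) x G') ≤ |LP| * l1dist G G' := by
  unfold oneStep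
  calc l1dist (fun y => ∑ u, π t x u * P x u G y) (fun y => ∑ u, π t x u * P x u G' y)
      ≤ ∑ y, ∑ u, π t x u * |P x u G y - P x u G' y| := by
        apply Finset.sum_le_sum
        intro y _
        rw [← Finset.sum_sub_distrib]
        refine (Finset.abs_sum_le_sum_abs _ _).trans (Finset.sum_le_sum fun u _ => ?_)
        rw [← mul_sub, abs_mul, abs_of_nonneg ((hπ t x).1 u)]
    _ = ∑ u, π t x u * l1dist (P x u G) (P x u G') := by
        rw [Finset.sum_comm]; simp_rw [← Finset.mul_sum]; rfl
    _ ≤ ∑ u, π t x u * (|LP| * l1dist G G') := by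
        apply Finset.sum_le_sum
        intro u _
        apply mul_le_mul_of_nonneg_left _ ((hπ t x).1 u)
        exact (hPLip x u G G' hG hG').trans
          (mul_le_mul_of_nonneg_right (le_abs_self _) (l1dist_nonneg _ _))
    _ = |LP| * l1dist G G' := by rw [← Finset.sum_mul, (hπ t x).2, one_mul]

lemma sum_sub_le_l1 [Fintype 𝒳] (q q' f : 𝒳 → ℝ) (M : ℝ) (hf : ∀ x, |f x| ≤ M) :
    |∑ x, q x * f x - ∑ x, q' x * f x| ≤ M * l1dist q q' := by
  rw [← Finset.sum_sub_distrib]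
  refine (Finset.abs_sum_le_sum_abs _ _).trans ?_
  unfold l1dist
  rw [Finset.mul_sum]
  apply Finset.sum_le_sum
  intro x _
  rw [← sub_mul, abs_mul, mul_comm]
  exact mul_le_mul_of_nonneg_right (hf x) (abs_nonneg _)

lemma jointLaw_zero [Fintype 𝒳] [DecidableEq 𝒳] [Fintype 𝒰] {N : ℕ}
    (P : 𝒳 → 𝒰 → (𝒳 → ℝ) → 𝒳 → ℝ) (μ0 : 𝒳 → ℝ) (ξ : Fin N → Fin N → ℝ)
    (πs : Fin N → ℕ → 𝒳 → 𝒰 → ℝ) (Y : Fin N → 𝒳) :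
    jointLaw P μ0 ξ πs 0 Y = ∏ i, μ0 (Y i) := rfl

lemma jointLaw_succ [Fintype 𝒳] [DecidableEq 𝒳] [Fintype 𝒰] {N : ℕ}
    (P : 𝒳 → 𝒰 → (𝒳 → ℝ) → 𝒳 → ℝ) (μ0 : 𝒳 → ℝ) (ξ : Fin N → Fin N → ℝ)
    (πs : Fin N → ℕ → 𝒳 → 𝒰 → ℝ) (t : ℕ) (Y : Fin N → 𝒳) :
    jointLaw P μ0 ξ πs (t+1) Y = ∑ X : Fin N → 𝒳, jointLaw P μ0 ξ πs t X *
      ∏ i, oneStep P (πs i t) (X i) (empNbhd ξ X i) (Y i) := rfl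

lemma exp_succ [Fintype 𝒳] [DecidableEq 𝒳] [Fintype 𝒰] {N : ℕ}
    (P : 𝒳 → 𝒰 → (𝒳 → ℝ) → 𝒳 → ℝ) (μ0 : 𝒳 → ℝ) (ξ : Fin N → Fin N → ℝ)
    (πs : Fin N → ℕ → 𝒳 → 𝒰 → ℝ) (t : ℕ) (F : (Fin N → 𝒳) → ℝ) :
    ∑ Y, jointLaw P μ0 ξ πs (t+1) Y * F Y = ∑ X : Fin N → 𝒳, jointLaw P μ0 ξ πs t X *
      ∑ Y : Fin N → 𝒳, (∏ i, oneStep P (πs i t) (X i) (empNbhd ξ X i) (Y i)) * F Y := by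
  simp_rw [jointLaw_succ, Finset.sum_mul, Finset.mul_sum]
  rw [Finset.sum_comm]
  simp_rw [mul_assoc]

lemma jointLaw_prob [Fintype 𝒳] [DecidableEq 𝒳] [Fintype 𝒰] {N : ℕ} (hN : 0 < N)
    {P : 𝒳 → 𝒰 → (𝒳 → ℝ) → 𝒳 → ℝ} (hP : IsKernel P) {μ0 : 𝒳 → ℝ} (hμ0 : μ0 ∈ simplex 𝒳)
    {ξ : Fin N → Fin N → ℝ} (hξ : IsEdgeWeights ξ)
    {πs : Fin N → ℕ → 𝒳 → 𝒰 → ℝ} (hπ : ∀ j, IsPolicy (πs j)) (t : ℕ) :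
    (∀ X, 0 ≤ jointLaw P μ0 ξ πs t X) ∧ ∑ X, jointLaw P μ0 ξ πs t X = 1 := by
  induction t with
  | zero =>
    exact ⟨fun X => Finset.prod_nonneg fun j _ => hμ0.1 _, prod_exp_total (fun _ => μ0) fun _ => hμ0.2⟩
  | succ t ih =>
    have hm : ∀ (X : Fin N → 𝒳) i, oneStep P (πs i t) (X i) (empNbhd ξ X i) ∈ simplex 𝒳 :=
      fun X i => oneStep_mem hP (hπ i) t (X i) (empNbhd_mem hN ξ hξ X i)
    constructor
    · intro Y
      rw [jointLaw_succ]
      exact Finset.sum_nonneg fun X _ => mul_nonneg (ih.1 X)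
        (Finset.prod_nonneg fun i _ => (hm X i).1 _)
    · have := exp_succ P μ0 ξ πs t (fun _ => 1)
      simp only [mul_one] at this
      rw [this]
      have h2 : ∀ X : Fin N → 𝒳, ∑ Y : Fin N → 𝒳,
          (∏ i, oneStep P (πs i t) (X i) (empNbhd ξ X i) (Y i)) = 1 :=
        fun X => prod_exp_total _ fun i => (hm X i).2
      simp_rw [h2, mul_one, ih.2]

end PartA

section PartB

/-- Recursive bound for the law of large numbers along the dynamics. -/
noncomputable def Kbd (LP cX : ℝ) (N : ℕ) (D : ℕ → ℝ) : ℕ → ℝ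
  | 0 => 5 / Real.sqrt N
  | (t+1) => 5 / Real.sqrt N + (|LP| * (cX * Kbd LP cX N D t + D t) + 2 / N) + Kbd LP cX N D t

/-- Weighted sums of block marginals. -/
noncomputable def detNbhd {N : ℕ} (ξ : Fin N → Fin N → ℝ) (m : Fin N → 𝒳 → ℝ) (j : Fin N) : 𝒳 → ℝ :=
  fun x => (N : ℝ)⁻¹ * ∑ k, ξ j k * m k x

lemma emp_close [Fintype 𝒳] [DecidableEq 𝒳] {N : ℕ}
    {ξ : Fin N → Fin N → ℝ} (hξ : IsEdgeWeights ξ) (Q : (Fin N → 𝒳) → ℝ) (hQ : ∀ X, 0 ≤ Q X)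
    (hQ1 : ∑ X, Q X = 1) (m : Fin N → 𝒳 → ℝ) (K : ℝ)
    (hK : ∀ f : Fin N → 𝒳 → ℝ, (∀ j x, |f j x| ≤ 1) →
      ∑ X : Fin N → 𝒳, Q X * |(N : ℝ)⁻¹ * ∑ j, f j (X j) - (N : ℝ)⁻¹ * ∑ j, ∑ x, m j x * f j x| ≤ K)
    (j : Fin N) (G : 𝒳 → ℝ) :
    ∑ X, Q X * l1dist (empNbhd ξ X j) G ≤ Fintype.card 𝒳 * K + l1dist (detNbhd ξ m j) G := by
  have h1 : ∀ x, ∑ X, Q X * |empNbhd ξ X j x - detNbhd ξ m j x| ≤ K := by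
    intro x
    have := hK (fun k y => ξ j k * (if y = x then 1 else 0)) (by
      intro k y
      rcases hξ.1 j k with h | h <;> rw [h] <;> split_ifs <;> norm_num)
    have h0 : detNbhd ξ m j x
        = (N : ℝ)⁻¹ * ∑ k, ∑ y, m k y * (ξ j k * (if y = x then 1 else 0)) := by
      unfold detNbhd
      congr 1
      apply Finset.sum_congr rfl
      intro k _
      simp [mul_comm]
    rw [h0]
    exact this
  have h2 : ∀ X, l1dist (empNbhd ξ X j) G
      ≤ ∑ x, |empNbhd ξ X j x - detNbhd ξ m j x| + l1dist (detNbhd ξ m j) G := by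
    intro X
    unfold l1dist
    rw [← Finset.sum_add_distrib]
    exact Finset.sum_le_sum fun x _ => abs_sub_le _ _ _
  calc ∑ X, Q X * l1dist (empNbhd ξ X j) G
      ≤ ∑ X, Q X * (∑ x, |empNbhd ξ X j x - detNbhd ξ m j x| + l1dist (detNbhd ξ m j) G) :=
        Finset.sum_le_sum fun X _ => mul_le_mul_of_nonneg_left (h2 X) (hQ X)
    _ = ∑ x, ∑ X, Q X * |empNbhd ξ X j x - detNbhd ξ m j x| + l1dist (detNbhd ξ m j) G := by
        simp_rw [mul_add, Finset.sum_add_distrib, ← Finset.sum_mul, hQ1, one_mul, Finset.mul_sum]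
        rw [Finset.sum_comm]
    _ ≤ ∑ x : 𝒳, K + l1dist (detNbhd ξ m j) G := by
        gcongr with x _
        exact h1 x
    _ = _ := by simp

lemma lln_main [Fintype 𝒳] [DecidableEq 𝒳] [Fintype 𝒰] {N : ℕ} (hN : 0 < N)
    {P : 𝒳 → 𝒰 → (𝒳 → ℝ) → 𝒳 → ℝ} (hP : IsKernel P) {LP : ℝ} (hPLip : KernelLipschitz P LP)
    {μ0 : 𝒳 → ℝ} (hμ0 : μ0 ∈ simplex 𝒳)
    {ξ : Fin N → Fin N → ℝ} (hξ : IsEdgeWeights ξ)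
    {πs π : Fin N → ℕ → 𝒳 → 𝒰 → ℝ} (hπs : ∀ j, IsPolicy (πs j)) (hπ : ∀ j, IsPolicy (π j))
    (i : Fin N) (hi : ∀ j, j ≠ i → πs j = π j)
    (G : ℕ → Fin N → 𝒳 → ℝ) (hG : ∀ t j, G t j ∈ subProb 𝒳)
    (m : ℕ → Fin N → 𝒳 → ℝ) (hm0 : ∀ j, m 0 j = μ0)
    (hm : ∀ t j y, m (t+1) j y = ∑ x, m t j x * oneStep P (π j t) x (G t j) y)
    (t : ℕ) (f : Fin N → 𝒳 → ℝ) (hf : ∀ j x, |f j x| ≤ 1) :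
    ∑ X : Fin N → 𝒳, jointLaw P μ0 ξ πs t X *
      |(N : ℝ)⁻¹ * ∑ j, f j (X j) - (N : ℝ)⁻¹ * ∑ j, ∑ x, m t j x * f j x| ≤
      Kbd LP (Fintype.card 𝒳) N
        (fun s => (N : ℝ)⁻¹ * ∑ j, l1dist (detNbhd ξ (m s) j) (G s j)) t := by
  have hNpos : (0:ℝ) < N := by exact_mod_cast hN
  induction t generalizing f with
  | zero =>
    simp_rw [hm0]
    exact prod_lln hN (fun _ => μ0) (fun _ => hμ0) f hf
  | succ t ih =>
    obtain ⟨hQ0, hQ1⟩ := jointLaw_prob hN hP hμ0 hξ hπs t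
    rw [exp_succ]
    set Q := jointLaw P μ0 ξ πs t with hQdef
    set D : ℕ → ℝ := fun s => (N : ℝ)⁻¹ * ∑ j, l1dist (detNbhd ξ (m s) j) (G s j) with hD
    set K := Kbd LP (Fintype.card 𝒳) N D t with hKdef
    have hemp := fun j => emp_close hξ Q hQ0 hQ1 (m t) K ih j (G t j)
    -- conditional laws
    set q : (Fin N → 𝒳) → Fin N → 𝒳 → ℝ :=
      fun X j => oneStep P (πs j t) (X j) (empNbhd ξ X j) with hq
    have hqm : ∀ X j, q X j ∈ simplex 𝒳 :=
      fun X j => oneStep_mem hP (hπs j) t (X j) (empNbhd_mem hN ξ hξ X j)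
    set f' : Fin N → 𝒳 → ℝ := fun j x => ∑ y, oneStep P (π j t) x (G t j) y * f j y with hf'
    have hf'1 : ∀ j x, |f' j x| ≤ 1 := fun j x =>
      avg_abs_le_one _ (oneStep_mem hP (hπ j) t x (hG t j)) _ (hf j)
    have hmean : ∀ j, ∑ x, m (t+1) j x * f j x = ∑ x, m t j x * f' j x := by
      intro j
      simp_rw [hm, hf', Finset.sum_mul, Finset.mul_sum]
      rw [Finset.sum_comm]
      simp_rw [mul_assoc]
    simp_rw [hmean]
    set mf := (N : ℝ)⁻¹ * ∑ j, ∑ x, m t j x * f' j x with hmf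
    have hdiff : ∀ X j, |∑ y, q X j y * f j y - f' j (X j)|
        ≤ |LP| * l1dist (empNbhd ξ X j) (G t j) + if j = i then 2 else 0 := by
      intro X j
      by_cases hj : j = i
      · have h1 := abs_le.1 (avg_abs_le_one _ (hqm X j) _ (hf j))
        have h2 := abs_le.1 (hf'1 j (X j))
        have h3 : 0 ≤ |LP| * l1dist (empNbhd ξ X j) (G t j) :=
          mul_nonneg (abs_nonneg _) (l1dist_nonneg _ _)
        rw [if_pos hj]
        exact abs_le.2 ⟨by linarith, by linarith⟩
      · rw [if_neg hj, add_zero]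
        have h1 := sum_sub_le_l1 (q X j) (oneStep P (π j t) (X j) (G t j)) (f j) 1 (hf j)
        rw [one_mul] at h1
        refine h1.trans ?_
        simp only [hq, hi j hj]
        exact oneStep_lip hPLip (hπ j) t (X j) (empNbhd_mem hN ξ hξ X j) (hG t j)
    have hstep : ∀ X, ∑ Y : Fin N → 𝒳, (∏ j, q X j (Y j)) * |(N : ℝ)⁻¹ * ∑ j, f j (Y j) - mf|
        ≤ 5 / Real.sqrt N + ((N : ℝ)⁻¹ * ∑ j, (|LP| * l1dist (empNbhd ξ X j) (G t j) +
            if j = i then 2 else 0)) + |(N : ℝ)⁻¹ * ∑ j, f' j (X j) - mf| := by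
      intro X
      set cm := (N : ℝ)⁻¹ * ∑ j, ∑ y, q X j y * f j y with hcm
      have hA := prod_lln hN (q X) (hqm X) f hf
      have hB : |cm - (N : ℝ)⁻¹ * ∑ j, f' j (X j)| ≤ (N : ℝ)⁻¹ * ∑ j,
          (|LP| * l1dist (empNbhd ξ X j) (G t j) + if j = i then 2 else 0) := by
        rw [hcm, ← mul_sub, abs_mul, abs_of_pos (inv_pos.2 hNpos), ← Finset.sum_sub_distrib]
        apply mul_le_mul_of_nonneg_left _ (inv_pos.2 hNpos).le
        exact (Finset.abs_sum_le_sum_abs _ _).trans (Finset.sum_le_sum fun j _ => hdiff X j)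
      have hC : |cm - mf| ≤ |cm - (N : ℝ)⁻¹ * ∑ j, f' j (X j)| + |(N : ℝ)⁻¹ * ∑ j, f' j (X j) - mf| :=
        abs_sub_le _ _ _
      have hpr0 : ∀ Y : Fin N → 𝒳, 0 ≤ ∏ j, q X j (Y j) := fun Y =>
        Finset.prod_nonneg fun j _ => (hqm X j).1 _
      calc ∑ Y : Fin N → 𝒳, (∏ j, q X j (Y j)) * |(N : ℝ)⁻¹ * ∑ j, f j (Y j) - mf|
          ≤ ∑ Y : Fin N → 𝒳, (∏ j, q X j (Y j)) * (|(N : ℝ)⁻¹ * ∑ j, f j (Y j) - cm| + |cm - mf|) :=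
            Finset.sum_le_sum fun Y _ => mul_le_mul_of_nonneg_left (abs_sub_le _ _ _) (hpr0 Y)
        _ = ∑ Y : Fin N → 𝒳, (∏ j, q X j (Y j)) * |(N : ℝ)⁻¹ * ∑ j, f j (Y j) - cm| + |cm - mf| := by
            simp_rw [mul_add, Finset.sum_add_distrib, ← Finset.sum_mul]
            rw [prod_exp_total _ (fun j => (hqm X j).2), one_mul]
        _ ≤ _ := by linarith
    calc ∑ X, Q X * ∑ Y : Fin N → 𝒳, (∏ j, q X j (Y j)) * |(N : ℝ)⁻¹ * ∑ j, f j (Y j) - mf|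
        ≤ ∑ X, Q X * (5 / Real.sqrt N + ((N : ℝ)⁻¹ * ∑ j, (|LP| * l1dist (empNbhd ξ X j) (G t j) +
            if j = i then 2 else 0)) + |(N : ℝ)⁻¹ * ∑ j, f' j (X j) - mf|) :=
          Finset.sum_le_sum fun X _ => mul_le_mul_of_nonneg_left (hstep X) (hQ0 X)
      _ = 5 / Real.sqrt N + (|LP| * ((N:ℝ)⁻¹ * ∑ j, ∑ X, Q X * l1dist (empNbhd ξ X j) (G t j)) + 2 / N)
          + ∑ X, Q X * |(N : ℝ)⁻¹ * ∑ j, f' j (X j) - mf| := by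
          simp_rw [mul_add, Finset.sum_add_distrib, ← Finset.sum_mul, hQ1, one_mul]
          congr 1
          congr 1
          simp_rw [mul_add, Finset.sum_add_distrib]
          congr 1
          · simp_rw [Finset.mul_sum]
            rw [Finset.sum_comm]
            refine Finset.sum_congr rfl fun X _ => Finset.sum_congr rfl fun j _ => ?_
            ring
          · rw [← Finset.sum_mul, hQ1]
            simp; ring
      _ ≤ 5 / Real.sqrt N + (|LP| * ((N:ℝ)⁻¹ * ∑ j, (Fintype.card 𝒳 * K +
            l1dist (detNbhd ξ (m t) j) (G t j))) + 2 / N) + K := by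
          gcongr with j _
          · exact hemp j
          · exact ih f' hf'1
      _ = Kbd LP (Fintype.card 𝒳) N D (t+1) := by
          simp only [Kbd, ← hKdef]
          congr 4
          rw [Finset.sum_add_distrib, mul_add]
          congr 1
          simp
          field_simp

/-- Marginal law comparison for a deviating agent. -/
lemma dev_marginal [Fintype 𝒳] [DecidableEq 𝒳] [Fintype 𝒰] {N : ℕ} (hN : 0 < N)
    {P : 𝒳 → 𝒰 → (𝒳 → ℝ) → 𝒳 → ℝ} (hP : IsKernel P) {LP : ℝ} (hPLip : KernelLipschitz P LP)
    {μ0 : 𝒳 → ℝ} (hμ0 : μ0 ∈ simplex 𝒳)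
    {ξ : Fin N → Fin N → ℝ} (hξ : IsEdgeWeights ξ)
    {πs : Fin N → ℕ → 𝒳 → 𝒰 → ℝ} (hπs : ∀ j, IsPolicy (πs j))
    (i : Fin N) (G : ℕ → 𝒳 → ℝ) (hG : ∀ t, G t ∈ subProb 𝒳) (η : ℝ) (t : ℕ)
    (hη : ∀ s < t, ∑ X, jointLaw P μ0 ξ πs s X * l1dist (empNbhd ξ X i) (G s) ≤ η)
    (f : 𝒳 → ℝ) (M : ℝ) (hf : ∀ x, |f x| ≤ M) :
    |∑ X, jointLaw P μ0 ξ πs t X * f (X i) - ∑ x, stateLaw P μ0 G (πs i) t x * f x|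
      ≤ M * (|LP| * (t * η)) := by
  induction t generalizing f with
  | zero =>
    have := prod_exp_one (N := N) (fun _ => μ0) (fun _ => hμ0.2) i f
    simp only [jointLaw_zero, stateLaw, this]
    simp
  | succ t ih =>
    obtain ⟨hQ0, hQ1⟩ := jointLaw_prob hN hP hμ0 hξ hπs t
    have ih' := ih (fun s hs => hη s (by omega))
    rw [exp_succ]
    set Q := jointLaw P μ0 ξ πs t with hQdef
    set f' : 𝒳 → ℝ := fun x => ∑ y, oneStep P (πs i t) x (G t) y * f y with hf'
    have hM : 0 ≤ M ∨ IsEmpty 𝒳 := by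
      rcases isEmpty_or_nonempty 𝒳 with h | ⟨⟨x⟩⟩
      · exact Or.inr h
      · exact Or.inl ((abs_nonneg _).trans (hf x))
    rcases hM with hM | hE
    swap
    · exfalso
      have := hμ0.2
      simp at this
    have hf'1 : ∀ x, |f' x| ≤ M := by
      intro x
      have hs := oneStep_mem hP (hπs i) t x (hG t)
      calc |f' x| ≤ ∑ y, |oneStep P (πs i t) x (G t) y * f y| := Finset.abs_sum_le_sum_abs _ _
        _ ≤ ∑ y, oneStep P (πs i t) x (G t) y * M := by
            apply Finset.sum_le_sum
            intro y _
            rw [abs_mul, abs_of_nonneg (hs.1 y)]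
            exact mul_le_mul_of_nonneg_left (hf y) (hs.1 y)
        _ = M := by rw [← Finset.sum_mul, hs.2, one_mul]
    have h1 : ∀ X : Fin N → 𝒳, ∑ Y : Fin N → 𝒳,
        (∏ j, oneStep P (πs j t) (X j) (empNbhd ξ X j) (Y j)) * f (Y i)
        = ∑ y, oneStep P (πs i t) (X i) (empNbhd ξ X i) y * f y := fun X =>
      prod_exp_one (fun j => oneStep P (πs j t) (X j) (empNbhd ξ X j))
        (fun j => (oneStep_mem hP (hπs j) t (X j) (empNbhd_mem hN ξ hξ X j)).2) i f
    simp_rw [h1]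
    have h2 : ∑ x, stateLaw P μ0 G (πs i) (t+1) x * f x = ∑ x, stateLaw P μ0 G (πs i) t x * f' x := by
      have : ∀ y, stateLaw P μ0 G (πs i) (t+1) y
        = ∑ x, stateLaw P μ0 G (πs i) t x * oneStep P (πs i t) x (G t) y := fun y => rfl
      simp_rw [this, hf', Finset.sum_mul, Finset.mul_sum]
      rw [Finset.sum_comm]
      simp_rw [mul_assoc]
    rw [h2]
    have h3 : |∑ X, Q X * ∑ y, oneStep P (πs i t) (X i) (empNbhd ξ X i) y * f y
        - ∑ X, Q X * f' (X i)| ≤ M * (|LP| * η) := by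
      rw [← Finset.sum_sub_distrib]
      calc _ ≤ ∑ X, |Q X * ∑ y, oneStep P (πs i t) (X i) (empNbhd ξ X i) y * f y - Q X * f' (X i)| :=
            Finset.abs_sum_le_sum_abs _ _
        _ ≤ ∑ X, Q X * (M * (|LP| * l1dist (empNbhd ξ X i) (G t))) := by
            apply Finset.sum_le_sum
            intro X _
            rw [← mul_sub, abs_mul, abs_of_nonneg (hQ0 X)]
            apply mul_le_mul_of_nonneg_left _ (hQ0 X)
            refine (sum_sub_le_l1 _ _ f M hf).trans ?_
            exact mul_le_mul_of_nonneg_left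
              (oneStep_lip hPLip (hπs i) t (X i) (empNbhd_mem hN ξ hξ X i) (hG t)) hM
        _ = M * (|LP| * ∑ X, Q X * l1dist (empNbhd ξ X i) (G t)) := by
            simp_rw [Finset.mul_sum]
            refine Finset.sum_congr rfl fun X _ => ?_
            ring
        _ ≤ M * (|LP| * η) := by
            gcongr
            exact hη t (by omega)
    have h4 := ih' f' hf'1
    have h5 := abs_sub_le (∑ X, Q X * ∑ y, oneStep P (πs i t) (X i) (empNbhd ξ X i) y * f y)
      (∑ X, Q X * f' (X i)) (∑ x, stateLaw P μ0 G (πs i) t x * f' x)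
    push_cast
    nlinarith [h3, h4, h5]

end PartB

section PartC

lemma rep_mem {N : ℕ} (j : Fin N) : rep N j ∈ Set.Icc (0:ℝ) 1 := by
  have hN : 0 < N := j.pos
  have hNpos : (0:ℝ) < N := by exact_mod_cast hN
  have : ((j:ℕ):ℝ) + 1 ≤ N := by exact_mod_cast j.2
  unfold rep
  exact ⟨by positivity, by rw [div_le_one hNpos]; exact this⟩

lemma integrableOn_unit {F : ℝ → ℝ} (hF : Measurable F) (C : ℝ)
    (hC : ∀ β ∈ Set.Ioc (0:ℝ) 1, |F β| ≤ C) : IntegrableOn F (Set.Ioc (0:ℝ) 1) := by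
  apply Measure.integrableOn_of_bounded (M := C) (by simp) hF.aestronglyMeasurable
  rw [ae_restrict_iff' measurableSet_Ioc]
  exact Filter.Eventually.of_forall fun β hβ => by simpa using hC β hβ

lemma abs_integral_unit_le {F : ℝ → ℝ} (C : ℝ)
    (hC : ∀ β ∈ Set.Ioc (0:ℝ) 1, |F β| ≤ C) : |∫ β in Set.Ioc (0:ℝ) 1, F β| ≤ C := by
  have := norm_setIntegral_le_of_norm_le_const (μ := volume) (s := Set.Ioc (0:ℝ) 1) (f := F) (C := C)
    (by simp) (fun x hx => by simpa using hC x hx)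
  simpa using this

lemma W_meas {W : ℝ → ℝ → ℝ} (hW : IsGraphon W) (α : ℝ) : Measurable (W α) :=
  hW.1.comp (measurable_const.prodMk measurable_id)

lemma simplex_le_one [Fintype 𝒳] {q : 𝒳 → ℝ} (hq : q ∈ simplex 𝒳) (x : 𝒳) : q x ≤ 1 := by
  rw [← hq.2]
  exact Finset.single_le_sum (fun y _ => hq.1 y) (Finset.mem_univ x)

lemma simplex_abs [Fintype 𝒳] {q : 𝒳 → ℝ} (hq : q ∈ simplex 𝒳) (x : 𝒳) : |q x| ≤ 1 := by
  rw [abs_of_nonneg (hq.1 x)]; exact simplex_le_one hq x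

lemma Wphi_abs {W : ℝ → ℝ → ℝ} (hW : IsGraphon W) (α β z : ℝ) (hz : |z| ≤ 1) : |W α β * z| ≤ 1 := by
  have h1 := hW.2.2 α β
  rw [abs_mul, abs_of_nonneg h1.1]
  exact mul_le_one₀ h1.2 (abs_nonneg _) hz

lemma nbhd_mem [Fintype 𝒳] {W : ℝ → ℝ → ℝ} (hW : IsGraphon W) (ν : ℝ → 𝒳 → ℝ)
    (hνm : ∀ x, Measurable fun β => ν β x) (hν : ∀ β ∈ Set.Icc (0:ℝ) 1, ν β ∈ simplex 𝒳) (α : ℝ) :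
    nbhd W ν α ∈ subProb 𝒳 := by
  have hIcc : ∀ β ∈ Set.Ioc (0:ℝ) 1, β ∈ Set.Icc (0:ℝ) 1 := fun β h => ⟨h.1.le, h.2⟩
  constructor
  · intro x
    apply setIntegral_nonneg measurableSet_Ioc
    intro β hβ
    exact mul_nonneg (hW.2.2 α β).1 ((hν β (hIcc β hβ)).1 x)
  · unfold nbhd
    rw [← integral_finsetSum]
    · refine (le_abs_self _).trans (abs_integral_unit_le 1 fun β hβ => ?_)
      rw [← Finset.mul_sum, (hν β (hIcc β hβ)).2]
      exact Wphi_abs hW α β 1 (by simp)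
    · intro x _
      exact integrableOn_unit ((W_meas hW α).mul (hνm x)) 1 fun β hβ =>
        Wphi_abs hW α β _ (simplex_abs (hν β (hIcc β hβ)) x)

lemma mf_mem [Fintype 𝒳] [Fintype 𝒰] {W : ℝ → ℝ → ℝ} (hW : IsGraphon W)
    {P : 𝒳 → 𝒰 → (𝒳 → ℝ) → 𝒳 → ℝ} (hP : IsKernel P) {μ0 : 𝒳 → ℝ} (hμ0 : μ0 ∈ simplex 𝒳)
    {πe : ℝ → ℕ → 𝒳 → 𝒰 → ℝ} (hπe : ∀ α ∈ Set.Icc (0:ℝ) 1, IsPolicy (πe α))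
    {μ : ℕ → ℝ → 𝒳 → ℝ} (hμ : IsMeanFieldOf W P μ0 πe μ) (t : ℕ) :
    ∀ α ∈ Set.Icc (0:ℝ) 1, μ t α ∈ simplex 𝒳 := by
  induction t with
  | zero => intro α hα; rw [hμ.2.1 α hα]; exact hμ0
  | succ t ih =>
    intro α hα
    have hs := fun x => oneStep_mem hP (hπe α hα) t x (nbhd_mem hW (μ t) (hμ.1 t) ih α)
    have hrec : ∀ y, μ (t+1) α y = ∑ x, μ t α x * oneStep P (πe α t) x (nbhd W (μ t) α) y :=
      hμ.2.2 t α hα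
    constructor
    · intro y
      rw [hrec]
      exact Finset.sum_nonneg fun x _ => mul_nonneg ((ih α hα).1 x) ((hs x).1 y)
    · simp_rw [hrec]
      rw [Finset.sum_comm]
      simp_rw [← Finset.mul_sum, (hs _).2, mul_one, (ih α hα).2]

lemma nbhd_lip [Fintype 𝒳] {W : ℝ → ℝ → ℝ} (hW : IsGraphon W) {LW : ℝ} (hWLip : GraphonLipschitz W LW)
    (φ : ℝ → ℝ) (hφm : Measurable φ) (hφ : ∀ β ∈ Set.Ioc (0:ℝ) 1, |φ β| ≤ 1)
    (α α' : ℝ) (hα : α ∈ Set.Icc (0:ℝ) 1) (hα' : α' ∈ Set.Icc (0:ℝ) 1) :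
    |(∫ β in Set.Ioc (0:ℝ) 1, W α β * φ β) - ∫ β in Set.Ioc (0:ℝ) 1, W α' β * φ β|
      ≤ |LW| * |α - α'| := by
  have hI : ∀ a, IntegrableOn (fun β => W a β * φ β) (Set.Ioc (0:ℝ) 1) := fun a =>
    integrableOn_unit ((W_meas hW a).mul hφm) 1 fun β hβ => Wphi_abs hW a β _ (hφ β hβ)
  rw [← integral_sub (hI α) (hI α')]
  apply abs_integral_unit_le
  intro β hβ
  have hβ' : β ∈ Set.Icc (0:ℝ) 1 := ⟨hβ.1.le, hβ.2⟩
  rw [← sub_mul, abs_mul]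
  have h1 := hWLip α β α' β hα hβ' hα' hβ'
  simp only [sub_self, abs_zero, add_zero] at h1
  have h2 : |W α β - W α' β| ≤ |LW| * |α - α'| :=
    h1.trans (mul_le_mul_of_nonneg_right (le_abs_self _) (abs_nonneg _))
  calc _ ≤ (|LW| * |α - α'|) * 1 := mul_le_mul h2 (hφ β hβ) (abs_nonneg _) (by positivity)
    _ = _ := mul_one _

lemma mf_cont [Fintype 𝒳] [Fintype 𝒰] {W : ℝ → ℝ → ℝ} (hW : IsGraphon W) {LW : ℝ}
    (hWLip : GraphonLipschitz W LW)
    {P : 𝒳 → 𝒰 → (𝒳 → ℝ) → 𝒳 → ℝ} (hP : IsKernel P) {LP : ℝ} (hPLip : KernelLipschitz P LP)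
    {μ0 : 𝒳 → ℝ} (hμ0 : μ0 ∈ simplex 𝒳)
    {πe : ℝ → ℕ → 𝒳 → 𝒰 → ℝ} (hπe : ∀ α ∈ Set.Icc (0:ℝ) 1, IsPolicy (πe α))
    {L : ℝ} {D : Finset ℝ} (hD : ∀ (t : ℕ) (x : 𝒳) (u : 𝒰),
    ∀ α ∈ Set.Icc (0:ℝ) 1, ∀ β ∈ Set.Icc (0:ℝ) 1,
      (∀ d ∈ D, d ∉ Set.uIcc α β) → |πe α t x u - πe β t x u| ≤ L * |α - β|)
    {μ : ℕ → ℝ → 𝒳 → ℝ} (hμ : IsMeanFieldOf W P μ0 πe μ) (t : ℕ) (x : 𝒳)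
    (α : ℝ) (hα : α ∈ Set.Icc (0:ℝ) 1) (hαD : α ∉ D) :
    ContinuousWithinAt (fun a => μ t a x) (Set.Icc 0 1) α := by
  have habs : Tendsto (fun a : ℝ => |a - α|) (nhdsWithin α (Set.Icc 0 1)) (nhds 0) := by
    have : Continuous fun a : ℝ => |a - α| := by fun_prop
    have := (this.tendsto α).mono_left (nhdsWithin_le_nhds (s := Set.Icc 0 1))
    simpa using this
  have hπc : ∀ t x u, Tendsto (fun a => πe a t x u) (nhdsWithin α (Set.Icc 0 1))
      (nhds (πe α t x u)) := by
    intro t x u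
    rw [tendsto_iff_norm_sub_tendsto_zero]
    refine squeeze_zero' (Filter.Eventually.of_forall fun _ => norm_nonneg _) ?_
      (by simpa using habs.const_mul L)
    have hopen : (↑D : Set ℝ)ᶜ ∈ nhds α := D.finite_toSet.isClosed.isOpen_compl.mem_nhds (by simpa using hαD)
    obtain ⟨r, hr, hball⟩ := Metric.mem_nhds_iff.1 hopen
    have hb : Metric.ball α r ∈ nhdsWithin α (Set.Icc 0 1) :=
      mem_nhdsWithin_of_mem_nhds (Metric.ball_mem_nhds α hr)
    filter_upwards [hb, self_mem_nhdsWithin] with a ha1 ha2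
    refine hD t x u a ha2 α hα fun d hd hd' => ?_
    have hsub : Set.uIcc a α ⊆ Metric.ball α r := by
      rw [← segment_eq_uIcc]
      exact (convex_ball α r).segment_subset ha1 (Metric.mem_ball_self hr)
    exact hball (hsub hd') hd
  induction t generalizing x with
  | zero =>
    have : ContinuousWithinAt (fun _ : ℝ => μ0 x) (Set.Icc 0 1) α := continuousWithinAt_const
    refine this.congr (fun a ha => by rw [hμ.2.1 a ha]) (by rw [hμ.2.1 α hα])
  | succ t ih =>
    have hmem := mf_mem hW hP hμ0 hπe hμ t
    have hG := fun a => nbhd_mem hW (μ t) (hμ.1 t) hmem a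
    have hPc : ∀ z u, Tendsto (fun a => P z u (nbhd W (μ t) a) x) (nhdsWithin α (Set.Icc 0 1))
        (nhds (P z u (nbhd W (μ t) α) x)) := by
      intro z u
      rw [tendsto_iff_norm_sub_tendsto_zero]
      refine squeeze_zero' (g := fun a => |LP| * (Fintype.card 𝒳 * (|LW| * |a - α|)))
        (Filter.Eventually.of_forall fun _ => norm_nonneg _) ?_
        (by simpa using ((habs.const_mul |LW|).const_mul (Fintype.card 𝒳 : ℝ)).const_mul |LP|)
      filter_upwards [self_mem_nhdsWithin] with a ha
      rw [Real.norm_eq_abs]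
      have h1 : |P z u (nbhd W (μ t) a) x - P z u (nbhd W (μ t) α) x|
          ≤ l1dist (P z u (nbhd W (μ t) a)) (P z u (nbhd W (μ t) α)) :=
        Finset.single_le_sum (f := fun x => |P z u (nbhd W (μ t) a) x - P z u (nbhd W (μ t) α) x|)
          (fun _ _ => abs_nonneg _) (Finset.mem_univ x)
      have h2 := hPLip z u _ _ (hG a) (hG α)
      have h3 : l1dist (nbhd W (μ t) a) (nbhd W (μ t) α) ≤ Fintype.card 𝒳 * (|LW| * |a - α|) := by
        unfold l1dist
        calc _ ≤ ∑ _x : 𝒳, |LW| * |a - α| := Finset.sum_le_sum fun y _ =>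
              nbhd_lip (𝒳 := 𝒳) hW hWLip (fun β => μ t β y) (hμ.1 t y)
                (fun β hβ => simplex_abs (hmem β ⟨hβ.1.le, hβ.2⟩) y) a α ha hα
          _ = _ := by simp
      calc _ ≤ LP * l1dist (nbhd W (μ t) a) (nbhd W (μ t) α) := h1.trans h2
        _ ≤ |LP| * l1dist (nbhd W (μ t) a) (nbhd W (μ t) α) :=
            mul_le_mul_of_nonneg_right (le_abs_self _) (l1dist_nonneg _ _)
        _ ≤ _ := mul_le_mul_of_nonneg_left h3 (abs_nonneg _)
    have hc : ContinuousWithinAt (fun a => ∑ z, μ t a z * ∑ u, πe a t z u * P z u (nbhd W (μ t) a) x)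
        (Set.Icc 0 1) α :=
      tendsto_finsetSum _ fun z _ => (ih z).mul (tendsto_finsetSum _ fun u _ =>
        (hπc t z u).mul (hPc z u))
    exact hc.congr (fun a ha => hμ.2.2 t a ha x) (hμ.2.2 t α hα x)

/-- cells -/
def cell (N : ℕ) (k : Fin N) : Set ℝ := Set.Ioc (((k : ℕ) : ℝ) / N) ((((k : ℕ) : ℝ) + 1) / N)

lemma cell_exists {N : ℕ} (hN : 0 < N) {β : ℝ} (hβ : β ∈ Set.Ioc (0:ℝ) 1) : ∃ k : Fin N, β ∈ cell N k := by
  have hNpos : (0:ℝ) < N := by exact_mod_cast hN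
  have h1 : 0 < ⌈N * β⌉₊ := Nat.ceil_pos.2 (mul_pos hNpos hβ.1)
  have h2 : ⌈N * β⌉₊ ≤ N := Nat.ceil_le.2 (by nlinarith [hβ.2])
  obtain ⟨n, hn⟩ : ∃ n, ⌈N * β⌉₊ = n + 1 := ⟨_, (Nat.succ_pred_eq_of_pos h1).symm⟩
  refine ⟨⟨n, by omega⟩, ?_, ?_⟩
  · rw [div_lt_iff₀ hNpos]
    have : n < ⌈N * β⌉₊ := by omega
    have := Nat.lt_ceil.1 this
    simpa [mul_comm] using this
  · rw [le_div_iff₀ hNpos]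
    have := Nat.le_ceil ((N:ℝ) * β)
    rw [hn] at this
    push_cast at this
    simpa [mul_comm] using this

lemma cell_unique {N : ℕ} {β : ℝ} {j k : Fin N} (hj : β ∈ cell N j) (hk : β ∈ cell N k) : j = k := by
  have hN : 0 < N := j.pos
  have hNpos : (0:ℝ) < N := by exact_mod_cast hN
  obtain ⟨a, b⟩ := hj
  obtain ⟨c, d⟩ := hk
  have h1 : ((j:ℕ):ℝ) < k + 1 := by
    have := a.trans_le d
    rwa [div_lt_div_iff_of_pos_right hNpos] at this
  have h2 : ((k:ℕ):ℝ) < j + 1 := by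
    have := c.trans_le b
    rwa [div_lt_div_iff_of_pos_right hNpos] at this
  have h1' : (j:ℕ) < k + 1 := by exact_mod_cast h1
  have h2' : (k:ℕ) < j + 1 := by exact_mod_cast h2
  ext; omega

lemma cell_sub {N : ℕ} (k : Fin N) : cell N k ⊆ Set.Ioc (0:ℝ) 1 := by
  intro β hβ
  have h := (rep_mem k).2
  exact ⟨lt_of_le_of_lt (by positivity) hβ.1, hβ.2.trans h⟩

open Classical in
/-- step function -/
noncomputable def stepFun (N : ℕ) (φ : ℝ → ℝ) : ℝ → ℝ := fun β =>
  ∑ k : Fin N, (if β ∈ cell N k then 1 else 0) * φ (rep N k)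

lemma stepFun_eq {N : ℕ} (φ : ℝ → ℝ) {β : ℝ} {k : Fin N} (h : β ∈ cell N k) :
    stepFun N φ β = φ (rep N k) := by
  unfold stepFun
  rw [Finset.sum_eq_single k]
  · simp [h]
  · intro j _ hj
    have : β ∉ cell N j := fun h' => hj (cell_unique h' h)
    simp [this]
  · simp

lemma stepFun_meas (N : ℕ) (φ : ℝ → ℝ) : Measurable (stepFun N φ) := by
  unfold stepFun
  apply Finset.measurable_sum
  intro k _
  apply Measurable.mul_const
  exact Measurable.ite measurableSet_Ioc measurable_const measurable_const

lemma stepFun_abs (N : ℕ) (φ : ℝ → ℝ) (hφ : ∀ β ∈ Set.Icc (0:ℝ) 1, |φ β| ≤ 1) (β : ℝ) :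
    |stepFun N φ β| ≤ 1 := by
  by_cases h : ∃ k : Fin N, β ∈ cell N k
  · obtain ⟨k, hk⟩ := h
    rw [stepFun_eq φ hk]
    exact hφ _ (rep_mem k)
  · push Not at h
    simp [stepFun, h]

lemma stepGraphon_eq {N : ℕ} (ξ : Fin N → Fin N → ℝ) {α β : ℝ} {j k : Fin N} (hj : α ∈ cell N j)
    (hk : β ∈ cell N k) : stepGraphon ξ α β = ξ j k := by
  have hj' : ∀ i : Fin N, (((i : ℕ) : ℝ) / N < α ∧ α ≤ (((i : ℕ) : ℝ) + 1) / N) ↔ i = j := fun i =>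
    ⟨fun h => cell_unique (β := α) h hj, fun h => h ▸ hj⟩
  have hk' : ∀ i : Fin N, (((i : ℕ) : ℝ) / N < β ∧ β ≤ (((i : ℕ) : ℝ) + 1) / N) ↔ i = k := fun i =>
    ⟨fun h => cell_unique (β := β) h hk, fun h => h ▸ hk⟩
  unfold stepGraphon
  simp [hj', hk']

lemma stepGraphon_meas {N : ℕ} (ξ : Fin N → Fin N → ℝ) :
    Measurable (Function.uncurry (stepGraphon ξ)) := by
  unfold stepGraphon Function.uncurry
  apply Finset.measurable_sum
  intro i _
  apply Finset.measurable_sum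
  intro j _
  apply Measurable.mul_const
  apply Measurable.mul
  · refine Measurable.ite ?_ measurable_const measurable_const
    exact measurable_fst (measurableSet_Ioc (a := ((i : ℕ) : ℝ) / N) (b := (((i : ℕ) : ℝ) + 1) / N))
  · refine Measurable.ite ?_ measurable_const measurable_const
    exact measurable_snd (measurableSet_Ioc (a := ((j : ℕ) : ℝ) / N) (b := (((j : ℕ) : ℝ) + 1) / N))

lemma integral_cells {N : ℕ} (hN : 0 < N) (F : ℝ → ℝ) (hF : IntegrableOn F (Set.Ioc (0:ℝ) 1)) :
    ∫ β in Set.Ioc (0:ℝ) 1, F β = ∑ k : Fin N, ∫ β in cell N k, F β := by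
  have hU : Set.Ioc (0:ℝ) 1 = ⋃ k : Fin N, cell N k := by
    ext β
    simp only [Set.mem_iUnion]
    exact ⟨fun h => cell_exists hN h, fun ⟨k, hk⟩ => cell_sub k hk⟩
  rw [hU, integral_iUnion_fintype]
  · intro k; exact measurableSet_Ioc
  · intro j k hjk
    exact Set.disjoint_left.2 fun β h1 h2 => hjk (cell_unique h1 h2)
  · intro k; exact hF.mono_set (cell_sub k)

lemma cell_const {N : ℕ} (k : Fin N) (c : ℝ) : ∫ _ in cell N k, c = (N:ℝ)⁻¹ * c := by
  have hN : 0 < N := k.pos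
  have hNpos : (0:ℝ) < N := by exact_mod_cast hN
  unfold cell
  rw [setIntegral_const, smul_eq_mul, measureReal_def, Real.volume_Ioc, ENNReal.toReal_ofReal]
  · congr 1; field_simp; ring
  · have : (((k:ℕ):ℝ) + 1) / N - ((k:ℕ):ℝ) / N = (N:ℝ)⁻¹ := by field_simp; ring
    rw [this]; positivity

end PartC

section PartD

lemma stepFun_tendsto (φ : ℝ → ℝ) (hφm : Measurable φ) (hφ : ∀ β ∈ Set.Icc (0:ℝ) 1, |φ β| ≤ 1)
    (D : Finset ℝ) (hc : ∀ α ∈ Set.Icc (0:ℝ) 1, α ∉ D → ContinuousWithinAt φ (Set.Icc 0 1) α) :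
    Tendsto (fun N : ℕ => ∫ β in Set.Ioc (0:ℝ) 1, |stepFun N φ β - φ β|) atTop (nhds 0) := by
  have h0 : (∫ _ in Set.Ioc (0:ℝ) 1, (0:ℝ)) = 0 := by simp
  refine Eq.subst (motive := fun z => Tendsto
    (fun N : ℕ => ∫ β in Set.Ioc (0:ℝ) 1, |stepFun N φ β - φ β|) atTop (nhds z)) h0 ?_
  apply tendsto_integral_of_dominated_convergence (fun _ => (2:ℝ))
  · intro N
    exact (((stepFun_meas N φ).sub hφm).abs).aestronglyMeasurable
  · exact integrableOn_unit measurable_const 2 (fun _ _ => by norm_num)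
  · intro N
    rw [ae_restrict_iff' measurableSet_Ioc]
    refine Filter.Eventually.of_forall fun β hβ => ?_
    have h1 := abs_le.1 (stepFun_abs N φ hφ β)
    have h2 := abs_le.1 (hφ β ⟨hβ.1.le, hβ.2⟩)
    rw [Real.norm_eq_abs, abs_abs]
    exact abs_le.2 ⟨by linarith, by linarith⟩
  · rw [ae_restrict_iff' measurableSet_Ioc]
    have hDn : ∀ᵐ β : ℝ, β ∉ (↑D : Set ℝ) :=
      (compl_mem_ae_iff.2 (D.finite_toSet.measure_zero volume))
    filter_upwards [hDn] with β hβD hβ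
    have hβ' : β ∈ Set.Icc (0:ℝ) 1 := ⟨hβ.1.le, hβ.2⟩
    have hcβ := Metric.continuousWithinAt_iff.1 (hc β hβ' (by simpa using hβD))
    rw [Metric.tendsto_atTop]
    intro e he
    obtain ⟨d, hd, hdd⟩ := hcβ e he
    obtain ⟨n, hn⟩ := exists_nat_one_div_lt hd
    refine ⟨n + 1, fun N hN => ?_⟩
    have hNp : 0 < N := by omega
    have hNpos : (0:ℝ) < N := by exact_mod_cast hNp
    obtain ⟨k, hk⟩ := cell_exists hNp hβ
    rw [stepFun_eq φ hk]
    have hdist : dist (rep N k) β < d := by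
      rw [Real.dist_eq]
      have h1 := hk.1
      have h2 := hk.2
      have h3 : rep N k = ((k:ℕ):ℝ) / N + 1 / N := by unfold rep; ring
      have h4 : (((k:ℕ):ℝ) + 1) / N = rep N k := rfl
      rw [h4] at h2
      rw [abs_of_nonneg (by linarith)]
      have h5 : (1:ℝ) / N ≤ 1 / ((n:ℝ) + 1) := by
        apply one_div_le_one_div_of_le (by positivity)
        exact_mod_cast hN
      linarith
    have := hdd (rep_mem k) hdist
    rw [Real.dist_eq] at this ⊢
    simpa using this

lemma det_bound {W : ℝ → ℝ → ℝ} (hW : IsGraphon W) {LW : ℝ} (hWLip : GraphonLipschitz W LW)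
    {N : ℕ} (hN : 0 < N) (ξ : Fin N → Fin N → ℝ) (hξ : IsEdgeWeights ξ)
    (φ : ℝ → ℝ) (hφm : Measurable φ) (hφ : ∀ β ∈ Set.Icc (0:ℝ) 1, |φ β| ≤ 1) :
    (N:ℝ)⁻¹ * ∑ j : Fin N, |(N:ℝ)⁻¹ * ∑ k : Fin N, ξ j k * φ (rep N k)
        - ∫ β in Set.Ioc (0:ℝ) 1, W (rep N j) β * φ β|
      ≤ (∫ α in Set.Ioc (0:ℝ) 1, |∫ β in Set.Ioc (0:ℝ) 1, (stepGraphon ξ α β - W α β) * stepFun N φ β|)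
        + (|LW| * (N:ℝ)⁻¹ + ∫ β in Set.Ioc (0:ℝ) 1, |stepFun N φ β - φ β|) := by
  have hNpos : (0:ℝ) < N := by exact_mod_cast hN
  set g := stepFun N φ with hg
  have hgm : Measurable g := stepFun_meas N φ
  have hg1 : ∀ β, |g β| ≤ 1 := stepFun_abs N φ hφ
  have hφ' : ∀ β ∈ Set.Ioc (0:ℝ) 1, |φ β| ≤ 1 := fun β hβ => hφ β ⟨hβ.1.le, hβ.2⟩
  have hξ1 : ∀ j k, |ξ j k| ≤ 1 := by
    intro j k
    rcases hξ.1 j k with h | h <;> rw [h] <;> norm_num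
  have hSG : ∀ α ∈ Set.Ioc (0:ℝ) 1, ∀ β ∈ Set.Ioc (0:ℝ) 1, |stepGraphon ξ α β| ≤ 1 := by
    intro α hα β hβ
    obtain ⟨j, hj⟩ := cell_exists hN hα
    obtain ⟨k, hk⟩ := cell_exists hN hβ
    rw [stepGraphon_eq ξ hj hk]; exact hξ1 j k
  have hSGg : ∀ α ∈ Set.Ioc (0:ℝ) 1, IntegrableOn (fun β => stepGraphon ξ α β * g β) (Set.Ioc (0:ℝ) 1) := by
    intro α hα
    apply integrableOn_unit _ 1
    · intro β hβ
      rw [abs_mul]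
      exact mul_le_one₀ (hSG α hα β hβ) (abs_nonneg _) (hg1 β)
    · exact ((stepGraphon_meas ξ).comp (measurable_const.prodMk measurable_id)).mul hgm
  have hWg : ∀ α, IntegrableOn (fun β => W α β * g β) (Set.Ioc (0:ℝ) 1) := fun α =>
    integrableOn_unit ((W_meas hW α).mul hgm) 1 fun β _ => Wphi_abs hW α β _ (hg1 β)
  have hWφ : ∀ α, IntegrableOn (fun β => W α β * φ β) (Set.Ioc (0:ℝ) 1) := fun α =>
    integrableOn_unit ((W_meas hW α).mul hφm) 1 fun β hβ => Wphi_abs hW α β _ (hφ' β hβ)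
  have hgφ : IntegrableOn (fun β => |g β - φ β|) (Set.Ioc (0:ℝ) 1) := by
    apply integrableOn_unit (hgm.sub hφm).abs 2
    intro β hβ
    have h1 := abs_le.1 (hg1 β)
    have h2 := abs_le.1 (hφ' β hβ)
    rw [abs_abs]
    change |g β - φ β| ≤ 2
    exact abs_le.2 ⟨by linarith, by linarith⟩
  set H : ℝ → ℝ := fun α => ∫ β in Set.Ioc (0:ℝ) 1, (stepGraphon ξ α β - W α β) * g β with hH
  have hHm : Measurable H := by
    have h1 : Measurable (Function.uncurry fun α β => (stepGraphon ξ α β - W α β) * g β) :=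
      ((stepGraphon_meas ξ).sub hW.1).mul (hgm.comp measurable_snd)
    exact (h1.stronglyMeasurable.integral_prod_right (ν := volume.restrict (Set.Ioc (0:ℝ) 1))).measurable
  have hHsub : ∀ α ∈ Set.Ioc (0:ℝ) 1, H α = (∫ β in Set.Ioc (0:ℝ) 1, stepGraphon ξ α β * g β)
      - ∫ β in Set.Ioc (0:ℝ) 1, W α β * g β := by
    intro α hα
    rw [← integral_sub (hSGg α hα) (hWg α)]
    simp only [hH, sub_mul]
  have hHi : IntegrableOn (fun α => |H α|) (Set.Ioc (0:ℝ) 1) := by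
    apply integrableOn_unit hHm.abs 2
    intro α hα
    rw [abs_abs]
    apply abs_integral_unit_le
    intro β hβ
    have h1 := hSG α hα β hβ
    have h2 := hW.2.2 α β
    have h3 : |stepGraphon ξ α β - W α β| ≤ 2 := by
      have := abs_le.1 h1
      exact abs_le.2 ⟨by linarith [h2.1, h2.2], by linarith [h2.1, h2.2]⟩
    rw [abs_mul]
    calc _ ≤ (2:ℝ) * 1 := mul_le_mul h3 (hg1 β) (abs_nonneg _) (by norm_num)
      _ = 2 := by norm_num
  set R := |LW| * (N:ℝ)⁻¹ + ∫ β in Set.Ioc (0:ℝ) 1, |g β - φ β| with hR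
  have hpt : ∀ j : Fin N, ∀ α ∈ cell N j, |(N:ℝ)⁻¹ * ∑ k : Fin N, ξ j k * φ (rep N k)
        - ∫ β in Set.Ioc (0:ℝ) 1, W (rep N j) β * φ β| ≤ |H α| + R := by
    intro j α hα
    have hα1 := cell_sub j hα
    have hA : ∫ β in Set.Ioc (0:ℝ) 1, stepGraphon ξ α β * g β
        = (N:ℝ)⁻¹ * ∑ k : Fin N, ξ j k * φ (rep N k) := by
      rw [integral_cells hN _ (hSGg α hα1), Finset.mul_sum]
      refine Finset.sum_congr rfl fun k _ => ?_
      rw [← cell_const k]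
      refine setIntegral_congr_fun measurableSet_Ioc fun β hβ => ?_
      simp only [stepGraphon_eq ξ hα hβ, hg, stepFun_eq φ hβ]
    have hB := nbhd_lip (𝒳 := Unit) hW hWLip g hgm (fun β _ => hg1 β) α (rep N j)
      ⟨hα1.1.le, hα1.2⟩ (rep_mem j)
    have hB' : |α - rep N j| ≤ (N:ℝ)⁻¹ := by
      have h1 := hα.1
      have h2 := hα.2
      have h3 : rep N j = ((j:ℕ):ℝ) / N + (N:ℝ)⁻¹ := by unfold rep; field_simp
      have h4 : (((j:ℕ):ℝ) + 1) / N = rep N j := rfl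
      rw [h4] at h2
      rw [abs_sub_comm, abs_of_nonneg (by linarith)]
      linarith
    have hC : |(∫ β in Set.Ioc (0:ℝ) 1, W (rep N j) β * g β) - ∫ β in Set.Ioc (0:ℝ) 1, W (rep N j) β * φ β|
        ≤ ∫ β in Set.Ioc (0:ℝ) 1, |g β - φ β| := by
      rw [← integral_sub (hWg _) (hWφ _)]
      refine (abs_integral_le_integral_abs).trans ?_
      apply setIntegral_mono_on _ hgφ measurableSet_Ioc
      · intro β hβ
        rw [← mul_sub, abs_mul]
        have h2 := hW.2.2 (rep N j) β
        rw [abs_of_nonneg h2.1]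
        exact mul_le_of_le_one_left (abs_nonneg _) h2.2
      · exact ((hWg _).sub (hWφ _)).abs
    have hB2 : |LW| * |α - rep N j| ≤ |LW| * (N:ℝ)⁻¹ :=
      mul_le_mul_of_nonneg_left hB' (abs_nonneg _)
    have hHα := hHsub α hα1
    rw [hA] at hHα
    have hHle := le_abs_self (H α)
    have hHle' := neg_abs_le (H α)
    have hB3 := abs_le.1 (hB.trans hB2)
    have hC3 := abs_le.1 hC
    exact abs_le.2 ⟨by linarith [hB3.1, hC3.1], by linarith [hB3.2, hC3.2]⟩
  have hHR : IntegrableOn (fun α => |H α| + R) (Set.Ioc (0:ℝ) 1) :=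
    hHi.add (integrableOn_unit measurable_const |R| fun _ _ => le_rfl)
  calc _ = ∑ j : Fin N, ∫ _α in cell N j, |(N:ℝ)⁻¹ * ∑ k : Fin N, ξ j k * φ (rep N k)
        - ∫ β in Set.Ioc (0:ℝ) 1, W (rep N j) β * φ β| := by
        rw [Finset.mul_sum]
        simp_rw [cell_const]
    _ ≤ ∑ j : Fin N, ∫ α in cell N j, (|H α| + R) := by
        apply Finset.sum_le_sum
        intro j _
        apply setIntegral_mono_on _ (hHR.mono_set (cell_sub j)) measurableSet_Ioc (hpt j)
        exact (integrableOn_unit measurable_const _ fun _ _ => le_rfl).mono_set (cell_sub j)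
    _ = ∫ α in Set.Ioc (0:ℝ) 1, (|H α| + R) := (integral_cells hN _ hHR).symm
    _ = (∫ α in Set.Ioc (0:ℝ) 1, |H α|) + R := by
        rw [integral_add hHi (integrableOn_unit measurable_const |R| fun _ _ => le_rfl)]
        simp

lemma det_tendsto {W : ℝ → ℝ → ℝ} (hW : IsGraphon W) {LW : ℝ} (hWLip : GraphonLipschitz W LW)
    (ξ : (N : ℕ) → Fin N → Fin N → ℝ) (hξ : ∀ N, IsEdgeWeights (ξ N))
    (hWconv : OpConvergesTo (fun N => stepGraphon (ξ N)) W)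
    (φ : ℝ → ℝ) (hφm : Measurable φ) (hφ : ∀ β ∈ Set.Icc (0:ℝ) 1, |φ β| ≤ 1)
    (D : Finset ℝ) (hc : ∀ α ∈ Set.Icc (0:ℝ) 1, α ∉ D → ContinuousWithinAt φ (Set.Icc 0 1) α) :
    Tendsto (fun N : ℕ => (N:ℝ)⁻¹ * ∑ j : Fin N, |(N:ℝ)⁻¹ * ∑ k : Fin N, ξ N j k * φ (rep N k)
        - ∫ β in Set.Ioc (0:ℝ) 1, W (rep N j) β * φ β|) atTop (nhds 0) := by
  have h1 : Tendsto (fun N : ℕ => ∫ α in Set.Ioc (0:ℝ) 1, |∫ β in Set.Ioc (0:ℝ) 1,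
      (stepGraphon (ξ N) α β - W α β) * stepFun N φ β|) atTop (nhds 0) := by
    rw [Metric.tendsto_atTop]
    intro e he
    obtain ⟨N₀, hN₀⟩ := hWconv (e/2) (by positivity)
    refine ⟨N₀, fun N hN => ?_⟩
    have := hN₀ N hN (stepFun N φ) (stepFun_meas N φ) (stepFun_abs N φ hφ)
    rw [Real.dist_eq, sub_zero, abs_of_nonneg (integral_nonneg fun _ => abs_nonneg _)]
    linarith
  have h2 : Tendsto (fun N : ℕ => |LW| * (N:ℝ)⁻¹) atTop (nhds 0) := by
    simpa using (tendsto_inv_atTop_nhds_zero_nat (𝕜 := ℝ)).const_mul |LW|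
  have h3 := stepFun_tendsto φ hφm hφ D hc
  have h4 := h1.add (h2.add h3)
  simp only [add_zero] at h4
  refine squeeze_zero' (Filter.Eventually.of_forall fun N => ?_) ?_ h4
  · exact mul_nonneg (by positivity) (Finset.sum_nonneg fun _ _ => abs_nonneg _)
  · filter_upwards [eventually_gt_atTop 0] with N hN
    exact det_bound hW hWLip hN (ξ N) (hξ N) φ hφm hφ

lemma Kbd_tendsto (LP cX : ℝ) (D : ℕ → ℕ → ℝ) (hD : ∀ s, Tendsto (fun N => D N s) atTop (nhds 0))
    (t : ℕ) : Tendsto (fun N : ℕ => Kbd LP cX N (D N) t) atTop (nhds 0) := by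
  have h5 : Tendsto (fun N : ℕ => 5 / Real.sqrt N) atTop (nhds 0) :=
    Tendsto.div_atTop tendsto_const_nhds
      (Real.tendsto_sqrt_atTop.comp tendsto_natCast_atTop_atTop)
  have h2 : Tendsto (fun N : ℕ => 2 / (N:ℝ)) atTop (nhds 0) :=
    Tendsto.div_atTop tendsto_const_nhds tendsto_natCast_atTop_atTop
  induction t with
  | zero => exact h5
  | succ t ih =>
    have := (h5.add (((((ih.const_mul cX).add (hD t)).const_mul |LP|)).add h2)).add ih
    simpa [Kbd] using this

end PartD

/-- joint convergence of the deviating agent's state and its empirical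
neighborhood mean field. Under Assumptions (W) and (Lip), for any uniformly bounded,
uniformly Lipschitz family 𝓗 of functions h : 𝒳×ℬ₁(𝒳) → ℝ and any ε, p > 0, t ∈ 𝒯,
there exists N' such that for all N > N':
sup_{h∈𝓗} |E[h(X^i_t,𝔾^i_t)] − E[h(X̂^{i/N}_t,𝔾^{i/N}_t)]| < ε, uniformly over all
deviations π̂ ∈ Π and all i in a set 𝒲_N of at least ⌊(1−p)N⌋ agents. -/
theorem deviating_agent_state_neighborhood_convergence
    {𝒳 𝒰 : Type*} [Fintype 𝒳] [DecidableEq 𝒳] [Nonempty 𝒳] [Fintype 𝒰] [Nonempty 𝒰]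
    (T : ℕ) (μ0 : 𝒳 → ℝ) (hμ0 : μ0 ∈ simplex 𝒳)
    (P : 𝒳 → 𝒰 → (𝒳 → ℝ) → 𝒳 → ℝ) (hP : IsKernel P)
    (r : 𝒳 → 𝒰 → (𝒳 → ℝ) → ℝ)
    (Lr LP LW : ℝ) (hrLip : RewardLipschitz r Lr) (hPLip : KernelLipschitz P LP)
    (W : ℝ → ℝ → ℝ) (hW : IsGraphon W) (hWLip : GraphonLipschitz W LW)
    (ξ : (N : ℕ) → Fin N → Fin N → ℝ) (hξ : ∀ N, IsEdgeWeights (ξ N))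
    (hWconv : OpConvergesTo (fun N => stepGraphon (ξ N)) W)
    (πe : ℝ → ℕ → 𝒳 → 𝒰 → ℝ)
    (hπe : ∀ α ∈ Set.Icc (0:ℝ) 1, IsPolicy (πe α))
    (hπemeas : ∀ t x u, Measurable fun α => πe α t x u)
    (hπeLip : EnsembleLipschitzUpTo πe)
    (μ : ℕ → ℝ → 𝒳 → ℝ) (hμ : IsMeanFieldOf W P μ0 πe μ)
    (ℋ : Set (𝒳 → (𝒳 → ℝ) → ℝ)) (Mh Lh : ℝ)
    (hℋbdd : ∀ h ∈ ℋ, ∀ x ν, ν ∈ subProb 𝒳 → |h x ν| ≤ Mh)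
    (hℋLip : ∀ h ∈ ℋ, ∀ x ν ν', ν ∈ subProb 𝒳 → ν' ∈ subProb 𝒳 →
      |h x ν - h x ν'| ≤ Lh * l1dist ν ν')
    (ε p : ℝ) (hε : 0 < ε) (hp : 0 < p) (t : ℕ) (ht : t < T) :
    ∃ N' : ℕ, ∀ N > N', ∃ Wset : Finset (Fin N),
      ⌊(1 - p) * (N : ℝ)⌋ ≤ (Wset.card : ℤ) ∧
      ∀ i ∈ Wset, ∀ πd : ℕ → 𝒳 → 𝒰 → ℝ, IsPolicy πd → ∀ h ∈ ℋ,
        |(∑ X : Fin N → 𝒳,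
            jointLaw P μ0 (ξ N) (Function.update (gammaN πe N) i πd) t X *
              h (X i) (empNbhd (ξ N) X i)) -
          ∑ x, stateLaw P μ0 (fun s => nbhd W (μ s) ((((i : ℕ) : ℝ) + 1) / N)) πd t x *
            h x (nbhd W (μ t) ((((i : ℕ) : ℝ) + 1) / N))| < ε := by
  obtain ⟨L, D, hD⟩ := hπeLip
  have hmem := mf_mem hW hP hμ0 hπe hμ
  have hG := fun s a => nbhd_mem hW (μ s) (hμ.1 s) (hmem s) a
  -- deterministic discrepancies
  set dd : (N : ℕ) → ℕ → Fin N → ℝ := fun N s j =>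
    l1dist (detNbhd (ξ N) (fun k => μ s (rep N k)) j) (nbhd W (μ s) (rep N j)) with hdd
  set Dd : ℕ → ℕ → ℝ := fun N s => (N:ℝ)⁻¹ * ∑ j, dd N s j with hDd
  have hDt : ∀ s, Tendsto (fun N => Dd N s) atTop (nhds 0) := by
    intro s
    have h1 : ∀ x : 𝒳, Tendsto (fun N : ℕ => (N:ℝ)⁻¹ * ∑ j : Fin N,
        |(N:ℝ)⁻¹ * ∑ k : Fin N, ξ N j k * μ s (rep N k) x
        - ∫ β in Set.Ioc (0:ℝ) 1, W (rep N j) β * μ s β x|) atTop (nhds 0) := fun x =>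
      det_tendsto hW hWLip ξ hξ hWconv (fun β => μ s β x) (hμ.1 s x)
        (fun β hβ => simplex_abs (hmem s β hβ) x) D
        (fun α hα hαD => mf_cont hW hWLip hP hPLip hμ0 hπe hD hμ s x α hα hαD)
    have h2 := tendsto_finsetSum (Finset.univ : Finset 𝒳) fun x _ => h1 x
    simp only [Finset.sum_const_zero] at h2
    refine h2.congr fun N => ?_
    simp only [hDd, hdd, l1dist, detNbhd, nbhd]
    rw [← Finset.mul_sum, Finset.sum_comm]
  have hKt := Kbd_tendsto LP (Fintype.card 𝒳) Dd hDt
  set C : ℝ := |Lh| + |Mh| * (|LP| * t) + 1 with hC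
  have hCpos : 0 < C := by positivity
  set η : ℝ := ε / (2 * C) with hη
  have hηpos : 0 < η := by positivity
  have ev1 : ∀ᶠ N : ℕ in atTop, ∀ s ∈ Finset.range (t+1),
      (Fintype.card 𝒳 : ℝ) * Kbd LP (Fintype.card 𝒳) N (Dd N) s < η / 2 := by
    rw [Filter.eventually_all_finset]
    intro s _
    have := (hKt s).const_mul (Fintype.card 𝒳 : ℝ)
    rw [mul_zero] at this
    exact this.eventually (gt_mem_nhds (by positivity))
  have ev2 : ∀ᶠ N : ℕ in atTop, ∑ s ∈ Finset.range (t+1), Dd N s < p * (η / 2) := by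
    have h2 := tendsto_finsetSum (Finset.range (t+1)) fun s _ => hDt s
    simp only [Finset.sum_const_zero] at h2
    exact h2.eventually (gt_mem_nhds (by positivity))
  obtain ⟨N', hN'⟩ := Filter.eventually_atTop.1 (ev1.and ev2)
  refine ⟨N', fun N hN => ?_⟩
  obtain ⟨hK, hDs⟩ := hN' N (le_of_lt hN)
  have hNp : 0 < N := by omega
  have hNpos : (0:ℝ) < N := by exact_mod_cast hNp
  have hdd0 : ∀ s j, 0 ≤ dd N s j := fun s j => l1dist_nonneg _ _
  classical
  refine ⟨Finset.univ.filter fun j => ∑ s ∈ Finset.range (t+1), dd N s j ≤ η / 2, ?_, ?_⟩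
  · -- Markov inequality
    set bad := Finset.univ.filter fun j : Fin N => ¬ ∑ s ∈ Finset.range (t+1), dd N s j ≤ η / 2 with hbad
    have hcard := Finset.card_filter_add_card_filter_not (s := (Finset.univ : Finset (Fin N)))
      (fun j => ∑ s ∈ Finset.range (t+1), dd N s j ≤ η / 2)
    rw [← hbad, Finset.card_univ, Fintype.card_fin] at hcard
    have h1 : (bad.card : ℝ) * (η / 2) ≤ ∑ j : Fin N, ∑ s ∈ Finset.range (t+1), dd N s j := by
      calc (bad.card : ℝ) * (η / 2) = ∑ _j ∈ bad, η / 2 := by simp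
        _ ≤ ∑ j ∈ bad, ∑ s ∈ Finset.range (t+1), dd N s j := by
            apply Finset.sum_le_sum
            intro j hj
            rw [hbad, Finset.mem_filter] at hj
            exact (not_le.1 hj.2).le
        _ ≤ _ := Finset.sum_le_univ_sum_of_nonneg fun j =>
            Finset.sum_nonneg fun s _ => hdd0 s j
    have h2 : ∑ j : Fin N, ∑ s ∈ Finset.range (t+1), dd N s j
        = N * ∑ s ∈ Finset.range (t+1), Dd N s := by
      rw [Finset.sum_comm, Finset.mul_sum]
      refine Finset.sum_congr rfl fun s _ => ?_
      simp only [hDd]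
      field_simp
    have h3 : (bad.card : ℝ) ≤ p * N := by
      have : (bad.card : ℝ) * (η / 2) ≤ (p * N) * (η / 2) := by
        rw [h2] at h1
        nlinarith
      exact le_of_mul_le_mul_right this (by positivity)
    have h4 : ((Finset.univ.filter fun j : Fin N =>
        ∑ s ∈ Finset.range (t+1), dd N s j ≤ η / 2).card : ℝ) + bad.card = N := by
      exact_mod_cast hcard
    have h5 : (1 - p) * (N:ℝ) ≤ (((Finset.univ.filter fun j : Fin N =>
        ∑ s ∈ Finset.range (t+1), dd N s j ≤ η / 2).card : ℤ) : ℝ) := by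
      push_cast
      linarith
    have h6 := (Int.floor_le ((1 - p) * (N:ℝ))).trans h5
    exact_mod_cast h6
  · intro i hi πd hπd h hh
    rw [Finset.mem_filter] at hi
    have hγ : ∀ j : Fin N, IsPolicy (gammaN πe N j) := fun j => hπe _ (rep_mem j)
    set πs := Function.update (gammaN πe N) i πd with hπs
    have hπsi : πs i = πd := by simp [hπs]
    have hπsP : ∀ j, IsPolicy (πs j) := by
      intro j
      by_cases hj : j = i
      · subst hj; rw [hπsi]; exact hπd
      · rw [hπs, Function.update_of_ne hj]; exact hγ j
    have hGe : (fun s => nbhd W (μ s) ((((i : ℕ) : ℝ) + 1) / N)) = fun s => nbhd W (μ s) (rep N i) := rfl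
    have hGe' : nbhd W (μ t) ((((i : ℕ) : ℝ) + 1) / N) = nbhd W (μ t) (rep N i) := rfl
    rw [hGe, hGe']
    have hE : ∀ s ∈ Finset.range (t+1), ∑ X, jointLaw P μ0 (ξ N) πs s X *
        l1dist (empNbhd (ξ N) X i) (nbhd W (μ s) (rep N i)) ≤ η := by
      intro s hs
      obtain ⟨hQ0, hQ1⟩ := jointLaw_prob hNp hP hμ0 (hξ N) hπsP s
      have h1 := emp_close (hξ N) _ hQ0 hQ1 (fun k => μ s (rep N k))
        (Kbd LP (Fintype.card 𝒳) N (Dd N) s)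
        (fun f hf => lln_main hNp hP hPLip hμ0 (hξ N) hπsP hγ i
          (fun j hj => by rw [hπs, Function.update_of_ne hj])
          (fun s j => nbhd W (μ s) (rep N j)) (fun s j => hG s _)
          (fun s j => μ s (rep N j)) (fun j => hμ.2.1 _ (rep_mem j))
          (fun s j y => hμ.2.2 s _ (rep_mem j) y) s f hf) i (nbhd W (μ s) (rep N i))
      have h2 := hK s hs
      have h3 : dd N s i ≤ η / 2 :=
        (Finset.single_le_sum (f := fun s => dd N s i) (fun s _ => hdd0 s i) hs).trans hi.2
      simp only [hdd] at h3
      linarith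
    obtain ⟨hQ0, hQ1⟩ := jointLaw_prob hNp hP hμ0 (hξ N) hπsP t
    set Gt := nbhd W (μ t) (rep N i) with hGt
    have hA : |∑ X, jointLaw P μ0 (ξ N) πs t X * h (X i) (empNbhd (ξ N) X i)
        - ∑ X, jointLaw P μ0 (ξ N) πs t X * h (X i) Gt| ≤ |Lh| * η := by
      rw [← Finset.sum_sub_distrib]
      calc _ ≤ ∑ X, |jointLaw P μ0 (ξ N) πs t X * h (X i) (empNbhd (ξ N) X i)
            - jointLaw P μ0 (ξ N) πs t X * h (X i) Gt| := Finset.abs_sum_le_sum_abs _ _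
        _ ≤ ∑ X, |Lh| * (jointLaw P μ0 (ξ N) πs t X * l1dist (empNbhd (ξ N) X i) Gt) := by
            apply Finset.sum_le_sum
            intro X _
            rw [← mul_sub, abs_mul, abs_of_nonneg (hQ0 X), mul_left_comm]
            apply mul_le_mul_of_nonneg_left _ (hQ0 X)
            exact (hℋLip h hh _ _ _ (empNbhd_mem hNp _ (hξ N) X i) (hG t _)).trans
              (mul_le_mul_of_nonneg_right (le_abs_self _) (l1dist_nonneg _ _))
        _ = |Lh| * ∑ X, jointLaw P μ0 (ξ N) πs t X * l1dist (empNbhd (ξ N) X i) Gt := by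
            rw [Finset.mul_sum]
        _ ≤ |Lh| * η := mul_le_mul_of_nonneg_left (hE t (by simp)) (abs_nonneg _)
    have hB := dev_marginal hNp hP hPLip hμ0 (hξ N) hπsP i (fun s => nbhd W (μ s) (rep N i))
      (fun s => hG s _) η t (fun s hs => hE s (by simp; omega)) (fun x => h x Gt) |Mh|
      (fun x => (hℋbdd h hh x Gt (hG t _)).trans (le_abs_self _))
    rw [hπsi] at hB
    have hfin : |Lh| * η + |Mh| * (|LP| * (t * η)) < ε := by
      have h1 : |Lh| * η + |Mh| * (|LP| * (t * η)) = (C - 1) * η := by rw [hC]; ring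
      have h2 : C * η = ε / 2 := by rw [hη]; field_simp
      rw [h1]; linarith
    exact lt_of_le_of_lt ((abs_sub_le _ _ _).trans (add_le_add hA hB)) hfin

end GMFG
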